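/- arXiv:2301.00735 — 7 statements merged into one kernel-verified Lean document; each statement's English description precedes it below -/
import Mathlib

section
/- Under the stated hypotheses, one has the equality of subspaces g^j = h^j for every j with 2 ≤ j ≤ s. -/
/-!
Brackets with `H 1` raise the layer of `H` by one. The Jacobi identity
`⁅⁅a, b⁆, c⁆ = ⁅a, ⁅b, c⁆⁆ - ⁅b, ⁅a, c⁆⁆` gives `[H 2, H j] ≤ H (j + 2)`, and then, by induction on `j`,
`[I, H j] ≤ H (j + 1)`: the case `j = 1` is the hypothesis `[I, G 1] ≤ H 2`, and the step uses
`⁅x, ⁅a, b⁆⁆ = ⁅⁅x, a⁆, b⁆ + ⁅a, ⁅x, b⁆⁆` with `⁅x, a⁆ ∈ H 2` for `x ∈ I`, `a ∈ H 1`.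
Since `G 1 = I + H 1`, once `G j = H j` the extra part `[I, H j]` of `G (j + 1) = [G 1, H j]` already
lies in `H (j + 1)`. The equality starts at `j = 2`, where `[H 1, I] ≤ H 2` follows from `[I, G 1] ≤ H 2`
by antisymmetry.
-/

/-- The subspace spanned by all brackets `⁅a, b⁆` with `a ∈ A`, `b ∈ B`. -/
def bracketSpan (𝕜 : Type*) {L : Type*} [Field 𝕜] [LieRing L] [LieAlgebra 𝕜 L]
    (A B : Submodule 𝕜 L) : Submodule 𝕜 L :=
  Submodule.span 𝕜 {x | ∃ a ∈ A, ∃ b ∈ B, x = ⁅a, b⁆}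

theorem lie_mem_bracketSpan {𝕜 L : Type*} [Field 𝕜] [LieRing L] [LieAlgebra 𝕜 L]
    {A B : Submodule 𝕜 L} {a b : L} (ha : a ∈ A) (hb : b ∈ B) :
    ⁅a, b⁆ ∈ bracketSpan 𝕜 A B :=
  Submodule.subset_span ⟨a, ha, b, hb, rfl⟩

theorem bracketSpan_le {𝕜 L : Type*} [Field 𝕜] [LieRing L] [LieAlgebra 𝕜 L]
    {A B C : Submodule 𝕜 L} :
    bracketSpan 𝕜 A B ≤ C ↔ ∀ a ∈ A, ∀ b ∈ B, ⁅a, b⁆ ∈ C := by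
  refine ⟨fun h a ha b hb => h (lie_mem_bracketSpan ha hb), fun h => ?_⟩
  refine Submodule.span_le.2 ?_
  rintro _ ⟨a, ha, b, hb, rfl⟩
  exact h a ha b hb

/-- Linearity of `y ↦ ⁅x, y⁆` reduces membership of `⁅x, y⁆` to the case where `y` is a single bracket. -/
theorem lie_mem_of_mem_bracketSpan {𝕜 L : Type*} [Field 𝕜] [LieRing L] [LieAlgebra 𝕜 L]
    {A B C : Submodule 𝕜 L} {x : L} (h : ∀ a ∈ A, ∀ b ∈ B, ⁅x, ⁅a, b⁆⁆ ∈ C)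
    {y : L} (hy : y ∈ bracketSpan 𝕜 A B) : ⁅x, y⁆ ∈ C := by
  have : bracketSpan 𝕜 A B ≤ C.comap (LieAlgebra.ad 𝕜 L x) :=
    bracketSpan_le.2 fun a ha b hb => h a ha b hb
  exact this hy

theorem stmt_0 {𝕜 L : Type*} [Field 𝕜] [CharZero 𝕜] [LieRing L] [LieAlgebra 𝕜 L]
    (s : ℕ) (hs : 2 ≤ s) (G H : ℕ → Submodule 𝕜 L)
    (hsum : (⨆ j ∈ Finset.Icc 1 s, G j) = ⊤)
    (hG : ∀ j, 1 ≤ j → j ≤ s - 1 → G (j + 1) = bracketSpan 𝕜 (G 1) (G j))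
    (hH : ∀ j, 1 ≤ j → j ≤ s - 1 → H (j + 1) = bracketSpan 𝕜 (H 1) (H j))
    (I : Submodule 𝕜 L) (hIG : I ≤ G 1)
    (hsup : I ⊔ H 1 = G 1) (hinf : I ⊓ H 1 = ⊥)
    (hbr : bracketSpan 𝕜 I (G 1) ≤ H 2) :
    ∀ j, 2 ≤ j → j ≤ s → G j = H j := by
  have hHmem : ∀ j, 1 ≤ j → j + 1 ≤ s → ∀ a ∈ H 1, ∀ b ∈ H j, ⁅a, b⁆ ∈ H (j + 1) := by
    intro j h1 hjs a ha b hb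
    rw [hH j h1 (by omega)]
    exact lie_mem_bracketSpan ha hb
  have hH2 : H 2 = bracketSpan 𝕜 (H 1) (H 1) := hH 1 le_rfl (by omega)
  have hH1G : H 1 ≤ G 1 := hsup ▸ le_sup_right
  have hIG2 : ∀ x ∈ I, ∀ y ∈ G 1, ⁅x, y⁆ ∈ H 2 := bracketSpan_le.1 hbr
  have hHH : ∀ j, 1 ≤ j → j + 2 ≤ s → ∀ x ∈ H 2, ∀ c ∈ H j, ⁅x, c⁆ ∈ H (j + 2) := by
    intro j h1 hjs x hx c hc
    rw [← lie_skew]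
    refine neg_mem (lie_mem_of_mem_bracketSpan (fun a ha b hb => ?_) (hH2 ▸ hx))
    rw [← lie_skew, lie_lie]
    refine neg_mem (sub_mem ?_ ?_)
    · exact hHmem (j + 1) (by omega) hjs a ha _ (hHmem j h1 (by omega) b hb c hc)
    · exact hHmem (j + 1) (by omega) hjs b hb _ (hHmem j h1 (by omega) a ha c hc)
  have hIH : ∀ j, 1 ≤ j → j + 1 ≤ s → ∀ x ∈ I, ∀ y ∈ H j, ⁅x, y⁆ ∈ H (j + 1) := by
    intro j h1
    induction j, h1 using Nat.le_induction with
    | base => exact fun _ x hx y hy => hIG2 x hx y (hH1G hy)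
    | succ j h1 ih =>
      intro hjs x hx y hy
      rw [hH j h1 (by omega)] at hy
      refine lie_mem_of_mem_bracketSpan (fun a ha b hb => ?_) hy
      rw [leibniz_lie]
      exact add_mem (hHH j h1 hjs _ (hIG2 x hx a (hH1G ha)) b hb)
        (hHmem (j + 1) (by omega) hjs a ha _ (ih (by omega) x hx b hb))
  intro j h2
  induction j, h2 using Nat.le_induction with
  | base =>
    intro _
    rw [hG 1 le_rfl (by omega)]
    apply le_antisymm
    · refine bracketSpan_le.2 fun a ha b hb => ?_
      have ha' := ha
      have hb' := hb
      rw [← hsup] at ha' hb'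
      obtain ⟨x, hx, h, hh, rfl⟩ := Submodule.mem_sup.1 ha'
      obtain ⟨x', hx', h', hh', rfl⟩ := Submodule.mem_sup.1 hb'
      rw [add_lie, lie_add h]
      refine add_mem (hIG2 x hx _ hb) (add_mem ?_ (hHmem 1 le_rfl hs h hh h' hh'))
      rw [← lie_skew]
      exact neg_mem (hIG2 x' hx' h (hH1G hh))
    · rw [hH2]
      exact bracketSpan_le.2 fun a ha b hb => lie_mem_bracketSpan (hH1G ha) (hH1G hb)
  | succ j h2 ih =>
    intro hjs
    rw [hG j (by omega) (by omega), ih (by omega)]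
    apply le_antisymm
    · refine bracketSpan_le.2 fun a ha b hb => ?_
      rw [← hsup] at ha
      obtain ⟨x, hx, h, hh, rfl⟩ := Submodule.mem_sup.1 ha
      rw [add_lie]
      exact add_mem (hIH j (by omega) hjs x hx b hb) (hHmem j (by omega) hjs h hh b hb)
    · rw [hH j (by omega) (by omega)]
      exact bracketSpan_le.2 fun a ha b hb => lie_mem_bracketSpan (hH1G ha) hb
end

section
/- For every linear functional λ : E → ℝ and every v ∈ D, one has g(Σᵢ₌₁ᵐ λ(Xᵢ)·Xᵢ, v) = λ(v); that is, the vector Σᵢ λ(Xᵢ)Xᵢ represents λ on D with respect to the scalar product g induced by the control norm N. -/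
/-!
A control `u` orthogonal to `ker T` is the minimal-norm preimage of `T u`, by Pythagoras
(`sInf_norm_preimage_eq`), so `N` is the transport of the Euclidean norm along the isomorphism
`(ker T)ᗮ ≃ range T`, and by polarization `g` is the transport of the Euclidean inner product.
The control `a = (λ(Xᵢ))ᵢ` satisfies `⟪a, u⟫ = λ(T u)` for every `u`; in particular it is orthogonal
to `ker T`. Writing `v = T u` with `u ⊥ ker T` gives `g(T a, v) = ⟪a, u⟫ = λ(v)`.
-/

theorem sInf_norm_preimage_eq {F E : Type*} [NormedAddCommGroup F] [InnerProductSpace ℝ F]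
    [AddCommGroup E] [Module ℝ E] (T : F →ₗ[ℝ] E) {u : F} (hu : u ∈ (LinearMap.ker T)ᗮ) :
    sInf {r : ℝ | ∃ w : F, T w = T u ∧ ‖w‖ = r} = ‖u‖ := by
  refine IsLeast.csInf_eq ⟨⟨u, rfl, rfl⟩, ?_⟩
  rintro r ⟨w, hw, rfl⟩
  have hk : w - u ∈ LinearMap.ker T := by simp [hw]
  have h0 : inner ℝ u (w - u) = 0 := Submodule.inner_left_of_mem_orthogonal hk hu
  have hp := norm_add_sq_eq_norm_sq_add_norm_sq_of_inner_eq_zero u (w - u) h0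
  rw [add_sub_cancel] at hp
  nlinarith [norm_nonneg u, norm_nonneg w, mul_self_nonneg ‖w - u‖]

theorem stmt_7 {E : Type*} [AddCommGroup E] [Module ℝ E]
    (m : ℕ) (hm : 1 ≤ m) (X : Fin m → E)
    (T : EuclideanSpace ℝ (Fin m) →ₗ[ℝ] E)
    (hT : ∀ u : EuclideanSpace ℝ (Fin m), T u = ∑ i, u i • X i)
    (N : E → ℝ)
    (hN : ∀ v, N v = sInf {r : ℝ | ∃ u : EuclideanSpace ℝ (Fin m), T u = v ∧ ‖u‖ = r})
    (g : E → E → ℝ)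
    (hg : ∀ v w, g v w = (N (v + w) ^ 2 - N (v - w) ^ 2) / 4)
    (lam : E →ₗ[ℝ] ℝ) (v : E) (hv : v ∈ LinearMap.range T) :
    g (∑ i, lam (X i) • X i) v = lam v := by
  have hNT : ∀ u ∈ (LinearMap.ker T)ᗮ, N (T u) = ‖u‖ := fun u hu => by
    rw [hN, sInf_norm_preimage_eq T hu]
  let a : EuclideanSpace ℝ (Fin m) := WithLp.toLp 2 fun i => lam (X i)
  have hTa : ∑ i, lam (X i) • X i = T a := (hT a).symm
  have ha : ∀ u, inner ℝ a u = lam (T u) := fun u => by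
    simp [hT, PiLp.inner_apply, a]
  have haK : a ∈ (LinearMap.ker T)ᗮ := by
    rw [Submodule.mem_orthogonal']
    intro u hu
    rw [ha, LinearMap.mem_ker.mp hu, map_zero]
  obtain ⟨u₀, rfl⟩ := hv
  -- Removing the kernel component of a preimage keeps its image and makes it orthogonal to `ker T`.
  obtain ⟨k, hk, u, hu, rfl⟩ := (LinearMap.ker T).exists_add_mem_mem_orthogonal u₀
  rw [map_add, LinearMap.mem_ker.mp hk, zero_add, hg, hTa, ← map_add, ← map_sub,
    hNT _ (add_mem haK hu), hNT _ (sub_mem haK hu), ← ha,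
    norm_add_sq_real, norm_sub_sq_real]
  ring
end

section
/- For all linear functionals λ, μ : E → ℝ, one has g(Σᵢ₌₁ᵐ λ(Xᵢ)·Xᵢ, Σᵢ₌₁ᵐ μ(Xᵢ)·Xᵢ) = Σᵢ₌₁ᵐ λ(Xᵢ)·μ(Xᵢ). -/
/-!
For a linear functional `ν` on `E`, put `p = (ν(X₁), …, ν(Xₘ))`, the pullback of `ν` along `T`.
If `T u = T p`, applying `ν` gives `⟪u, p⟫ = ν(T u) = ν(T p) = ‖p‖²`, so `‖p‖ ≤ ‖u‖` by
Cauchy-Schwarz. Hence `p` is a preimage of least norm of `T p = ∑ ν(Xᵢ) Xᵢ`, and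
`N(∑ ν(Xᵢ) Xᵢ)² = ∑ ν(Xᵢ)²` (`sq_sInf_norm_preimage`). Taking `ν = λ ± μ` and polarizing
gives the identity.
-/

theorem sq_sInf_norm_preimage {E : Type*} [AddCommGroup E] [Module ℝ E]
    {m : ℕ} (X : Fin m → E) (T : EuclideanSpace ℝ (Fin m) →ₗ[ℝ] E)
    (hT : ∀ u : EuclideanSpace ℝ (Fin m), T u = ∑ i, u i • X i) (nu : E →ₗ[ℝ] ℝ) :
    sInf {r : ℝ | ∃ u : EuclideanSpace ℝ (Fin m), T u = ∑ i, nu (X i) • X i ∧ ‖u‖ = r} ^ 2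
      = ∑ i, nu (X i) ^ 2 := by
  let p : EuclideanSpace ℝ (Fin m) := WithLp.toLp 2 fun i => nu (X i)
  have hp : ‖p‖ ^ 2 = ∑ i, nu (X i) ^ 2 := by
    simp [EuclideanSpace.norm_sq_eq, p]
  have hleast : IsLeast {r : ℝ | ∃ u : EuclideanSpace ℝ (Fin m),
      T u = ∑ i, nu (X i) • X i ∧ ‖u‖ = r} ‖p‖ := by
    refine ⟨⟨p, hT p, rfl⟩, ?_⟩
    rintro r ⟨u, hu, rfl⟩
    have hinner : inner ℝ u p = ‖p‖ ^ 2 := by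
      have h := congrArg nu ((hT u).symm.trans hu)
      simp only [map_sum, map_smul, smul_eq_mul] at h
      rw [hp, PiLp.inner_apply]
      simpa [p, sq, mul_comm] using h
    have hcs := real_inner_le_norm u p
    by_contra! hlt
    nlinarith [norm_nonneg u]
  rw [hleast.csInf_eq, hp]


theorem stmt_8 {E : Type*} [AddCommGroup E] [Module ℝ E]
    (m : ℕ) (hm : 1 ≤ m) (X : Fin m → E)
    (T : EuclideanSpace ℝ (Fin m) →ₗ[ℝ] E)
    (hT : ∀ u : EuclideanSpace ℝ (Fin m), T u = ∑ i, u i • X i)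
    (N : E → ℝ)
    (hN : ∀ v, N v = sInf {r : ℝ | ∃ u : EuclideanSpace ℝ (Fin m), T u = v ∧ ‖u‖ = r})
    (g : E → E → ℝ)
    (hg : ∀ v w, g v w = (N (v + w) ^ 2 - N (v - w) ^ 2) / 4)
    (lam mu : E →ₗ[ℝ] ℝ) :
    g (∑ i, lam (X i) • X i) (∑ i, mu (X i) • X i) = ∑ i, lam (X i) * mu (X i) := by
  have hN' (nu : E →ₗ[ℝ] ℝ) : N (∑ i, nu (X i) • X i) ^ 2 = ∑ i, nu (X i) ^ 2 := by
    rw [hN, sq_sInf_norm_preimage X T hT nu]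
  have hadd := hN' (lam + mu)
  have hsub := hN' (lam - mu)
  simp only [LinearMap.add_apply, LinearMap.sub_apply, add_smul, sub_smul,
    Finset.sum_add_distrib, Finset.sum_sub_distrib] at hadd hsub
  rw [hg, hadd, hsub, ← Finset.sum_sub_distrib, Finset.sum_div]
  exact Finset.sum_congr rfl fun i _ => by ring
end

section
/- The Grushin distance d is finite for every pair of points, defines a metric on ℝ² (i.e. d(a,b) = 0 if and only if a = b, d is symmetric, and d satisfies the triangle inequality), and the topology induced by d on ℝ² coincides with the Euclidean topology. -/
/-!
The proof compares `grushinDist` with the Euclidean structure from both sides.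

*Upper bound* (`exists_reaches`): from `(x, y)` one reaches `(x', y')` with a controlled curve of
length at most `|x' - x| + 3 √|y' - y|`. Moving horizontally away from the singular line by
`√|y' - y|` makes the first coordinate at least `√|y' - y|` in absolute value, so the vertical
displacement then costs at most `√|y' - y|`. This gives finiteness and the continuity of
`grushinDist a` at `a`.

*Lower bound* (`grushinDist_lower`): integrating the control along a curve of length `ℓ` gives
`|b.1 - a.1| ≤ ℓ`, and since the first coordinate is bounded by `|a.1| + ℓ` along it, also
`|b.2 - a.2| ≤ (|a.1| + ℓ) ℓ`. This gives positivity, and that `grushinDist`-balls shrink to points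
in the Euclidean topology.

Symmetry and the triangle inequality come from reversing and concatenating controlled curves
(`Reaches.symm`, `Reaches.trans`), since `grushinDist a b` is the infimum of the lengths `ℓ` with
`Reaches a b ℓ`.
-/

open MeasureTheory Set

/-- `u` is a valid (bounded measurable) control for the Lipschitz curve `γ` in the
Grushin plane: `γ'(t) = (u₁(t), γ₁(t)·u₂(t))` for a.e. `t ∈ [0,1]`, expressed in
integral form. -/
def IsAdmissiblePair (γ u : ℝ → ℝ × ℝ) : Prop :=
  (∃ K : NNReal, LipschitzOnWith K γ (Icc 0 1)) ∧
  AEStronglyMeasurable u (volume.restrict (Icc (0 : ℝ) 1)) ∧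
  (∃ C : ℝ, ∀ t ∈ Icc (0 : ℝ) 1, ‖u t‖ ≤ C) ∧
  ∀ t ∈ Icc (0 : ℝ) 1,
    γ t = γ 0 + ∫ s in (0 : ℝ)..t, (((u s).1, (γ s).1 * (u s).2) : ℝ × ℝ)

/-- A curve is admissible if it has a control. -/
def IsAdmissible (γ : ℝ → ℝ × ℝ) : Prop := ∃ u, IsAdmissiblePair γ u

/-- The length of an admissible curve: infimum over controls of the Euclidean
norm of the control. -/
noncomputable def curveLength (γ : ℝ → ℝ × ℝ) : ℝ :=
  sInf {L | ∃ u, IsAdmissiblePair γ u ∧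
    L = ∫ t in (0 : ℝ)..1, Real.sqrt ((u t).1 ^ 2 + (u t).2 ^ 2)}

/-- The Grushin (Carnot–Carathéodory) distance on `ℝ²`. -/
noncomputable def grushinDist (a b : ℝ × ℝ) : ℝ :=
  sInf {L | ∃ γ, IsAdmissible γ ∧ γ 0 = a ∧ γ 1 = b ∧ L = curveLength γ}

/-- A geodesic of the Grushin distance, parametrized on `[0,1]`. -/
def IsGeodesic (γ : ℝ → ℝ × ℝ) : Prop :=
  ∀ s ∈ Icc (0 : ℝ) 1, ∀ t ∈ Icc (0 : ℝ) 1,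
    grushinDist (γ s) (γ t) = |s - t| * grushinDist (γ 0) (γ 1)

namespace Grushin

/-! ### Controlled curves on arbitrary intervals -/

/-- The right-hand side `(u₁, γ₁ u₂)` of the control equation. -/
def velocity (γ u : ℝ → ℝ × ℝ) (s : ℝ) : ℝ × ℝ := ((u s).1, (γ s).1 * (u s).2)

/-- The Euclidean norm of the control. -/
noncomputable def speed (u : ℝ → ℝ × ℝ) (t : ℝ) : ℝ := Real.sqrt ((u t).1 ^ 2 + (u t).2 ^ 2)

/-- `γ` is controlled by `u` between the times `p` and `q`, in either order. Measurability of the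
bounded control is encoded as interval integrability, and `γ` is only required to be continuous:
the Lipschitz property then follows from the boundedness of the control. -/
structure Controlled (γ u : ℝ → ℝ × ℝ) (p q : ℝ) : Prop where
  cont : ContinuousOn γ (uIcc p q)
  int : IntervalIntegrable u volume p q
  bdd : ∃ C : ℝ, ∀ t ∈ uIcc p q, ‖u t‖ ≤ C
  eq : ∀ t ∈ uIcc p q, γ t = γ p + ∫ s in p..t, velocity γ u s

lemma speed_nonneg (u : ℝ → ℝ × ℝ) (t : ℝ) : 0 ≤ speed u t := Real.sqrt_nonneg _

lemma abs_fst_le_speed (u : ℝ → ℝ × ℝ) (t : ℝ) : |(u t).1| ≤ speed u t :=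
  Real.abs_le_sqrt (by nlinarith [sq_nonneg (u t).2])

lemma abs_snd_le_speed (u : ℝ → ℝ × ℝ) (t : ℝ) : |(u t).2| ≤ speed u t :=
  Real.abs_le_sqrt (by nlinarith [sq_nonneg (u t).1])

lemma speed_le (u : ℝ → ℝ × ℝ) (t : ℝ) : speed u t ≤ 2 * ‖u t‖ := by
  have h1 : |(u t).1| ≤ ‖u t‖ := norm_fst_le (u t)
  have h2 : |(u t).2| ≤ ‖u t‖ := norm_snd_le (u t)
  unfold speed
  rw [Real.sqrt_le_left (by positivity), ← sq_abs (u t).1, ← sq_abs (u t).2]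
  nlinarith [abs_nonneg (u t).1, abs_nonneg (u t).2]

lemma intervalIntegrable_fst {u : ℝ → ℝ × ℝ} {p q : ℝ} (h : IntervalIntegrable u volume p q) :
    IntervalIntegrable (fun s => (u s).1) volume p q :=
  ⟨h.1.fst, h.2.fst⟩

lemma intervalIntegrable_snd {u : ℝ → ℝ × ℝ} {p q : ℝ} (h : IntervalIntegrable u volume p q) :
    IntervalIntegrable (fun s => (u s).2) volume p q :=
  ⟨h.1.snd, h.2.snd⟩

lemma intervalIntegrable_speed {u : ℝ → ℝ × ℝ} {p q : ℝ} (h : IntervalIntegrable u volume p q) :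
    IntervalIntegrable (speed u) volume p q := by
  refine (h.norm.const_mul 2).mono_fun' ?_ ?_
  · have hc : Continuous fun z : ℝ × ℝ => Real.sqrt (z.1 ^ 2 + z.2 ^ 2) := by fun_prop
    exact hc.comp_aestronglyMeasurable h.def'.aestronglyMeasurable
  · refine Filter.Eventually.of_forall fun t => ?_
    simpa only [Real.norm_of_nonneg (speed_nonneg u t)] using speed_le u t

lemma intervalIntegrable_velocity {γ u : ℝ → ℝ × ℝ} {p q : ℝ}
    (hγ : ContinuousOn γ (uIcc p q)) (hu : IntervalIntegrable u volume p q) :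
    IntervalIntegrable (velocity γ u) volume p q := by
  have h1 := intervalIntegrable_fst hu
  have h2 : IntervalIntegrable (fun s => (γ s).1 * (u s).2) volume p q :=
    (intervalIntegrable_snd hu).continuousOn_mul hγ.fst
  exact ⟨h1.1.prodMk h2.1, h1.2.prodMk h2.2⟩

namespace Controlled

variable {γ u γ' u' : ℝ → ℝ × ℝ} {p q r : ℝ}

lemma vel (h : Controlled γ u p q) : IntervalIntegrable (velocity γ u) volume p q :=
  intervalIntegrable_velocity h.cont h.int

lemma swap (h : Controlled γ u p q) : Controlled γ u q p where
  cont := by rw [uIcc_comm]; exact h.cont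
  int := h.int.symm
  bdd := by rw [uIcc_comm]; exact h.bdd
  eq t ht := by
    rw [uIcc_comm] at ht
    have hpt : IntervalIntegrable (velocity γ u) volume p t :=
      h.vel.mono_set (uIcc_subset_uIcc_left ht)
    rw [h.eq t ht, h.eq q right_mem_uIcc, add_assoc,
      intervalIntegral.integral_add_adjacent_intervals h.vel
        (h.vel.symm.trans hpt)]

lemma congr (h : Controlled γ u p q) (hγ : EqOn γ γ' (uIcc p q))
    (hu : EqOn u u' (uIoc p q)) (hb : ∃ C : ℝ, ∀ t ∈ uIcc p q, ‖u' t‖ ≤ C) :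
    Controlled γ' u' p q where
  cont := h.cont.congr hγ.symm
  int := h.int.congr hu
  bdd := hb
  eq t ht := by
    rw [← hγ ht, ← hγ left_mem_uIcc, h.eq t ht]
    congr 1
    refine intervalIntegral.integral_congr_ae (Filter.Eventually.of_forall fun s hs => ?_)
    have hs' : s ∈ uIoc p q := uIoc_subset_uIoc_of_uIcc_subset_uIcc (uIcc_subset_uIcc_left ht) hs
    simp only [velocity, hu hs', hγ (uIoc_subset_uIcc hs')]

/-- Affine change of time `t ↦ c t + d`; the control is multiplied by `c`. -/
lemma affine (h : Controlled γ u p q) {c d p' q' : ℝ} (hc : c ≠ 0) (hp : c * p' + d = p)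
    (hq : c * q' + d = q) :
    Controlled (fun t => γ (c * t + d)) (fun t => c • u (c * t + d)) p' q' := by
  have hmaps : MapsTo (fun t => c * t + d) (uIcc p' q') (uIcc p q) := by
    intro t ht
    rw [mem_uIcc] at ht ⊢
    subst hp hq
    rcases lt_or_gt_of_ne hc with hc | hc <;> rcases ht with ⟨h1, h2⟩ | ⟨h1, h2⟩
    · right; constructor <;> nlinarith
    · left; constructor <;> nlinarith
    · left; constructor <;> nlinarith
    · right; constructor <;> nlinarith
  refine ⟨h.cont.comp (by fun_prop) hmaps, ?_, ?_, ?_⟩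
  · have h1 := (h.int.comp_add_right d).comp_mul_left (c := c)
    have e1 : (p - d) / c = p' := by rw [← hp]; field_simp; ring
    have e2 : (q - d) / c = q' := by rw [← hq]; field_simp; ring
    rw [e1, e2] at h1
    exact ⟨h1.1.smul c, h1.2.smul c⟩
  · obtain ⟨C, hC⟩ := h.bdd
    refine ⟨|c| * C, fun t ht => ?_⟩
    rw [norm_smul, Real.norm_eq_abs]
    exact mul_le_mul_of_nonneg_left (hC _ (hmaps ht)) (abs_nonneg c)
  · intro t ht
    have hv : velocity (fun t => γ (c * t + d)) (fun t => c • u (c * t + d)) =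
        fun t => c • velocity γ u (c * t + d) := by
      funext s
      ext
      · simp [velocity]
      · simp [velocity]; ring
    rw [hv, intervalIntegral.integral_smul, intervalIntegral.smul_integral_comp_mul_add, hp]
    exact h.eq _ (hmaps ht)

lemma glue (hpq : p ≤ q) (hqr : q ≤ r) (h₁ : Controlled γ u p q) (h₂ : Controlled γ u q r) :
    Controlled γ u p r := by
  have hU : uIcc p r = uIcc p q ∪ uIcc q r := by
    rw [uIcc_of_le hpq, uIcc_of_le hqr, uIcc_of_le (hpq.trans hqr), Icc_union_Icc_eq_Icc hpq hqr]
  refine ⟨?_, h₁.int.trans h₂.int, ?_, ?_⟩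
  · rw [hU]
    exact h₁.cont.union_of_isClosed h₂.cont isClosed_Icc isClosed_Icc
  · obtain ⟨C₁, hC₁⟩ := h₁.bdd
    obtain ⟨C₂, hC₂⟩ := h₂.bdd
    refine ⟨max C₁ C₂, fun t ht => ?_⟩
    rw [hU] at ht
    rcases ht with ht | ht
    · exact (hC₁ t ht).trans (le_max_left _ _)
    · exact (hC₂ t ht).trans (le_max_right _ _)
  · intro t ht
    rw [hU] at ht
    rcases ht with ht | ht
    · exact h₁.eq t ht
    · rw [h₂.eq t ht, h₁.eq q right_mem_uIcc, add_assoc,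
        intervalIntegral.integral_add_adjacent_intervals h₁.vel
          (h₂.vel.mono_set (uIcc_subset_uIcc_left ht))]

end Controlled

lemma speed_affine (u : ℝ → ℝ × ℝ) (c d : ℝ) :
    speed (fun t => c • u (c * t + d)) = fun t => |c| * speed u (c * t + d) := by
  funext t
  simp only [speed, Prod.smul_fst, Prod.smul_snd, smul_eq_mul]
  rw [← Real.sqrt_sq_eq_abs, ← Real.sqrt_mul (sq_nonneg c)]
  congr 1
  ring

/-! ### Comparison with admissible pairs -/

lemma Controlled.isAdmissiblePair {γ u : ℝ → ℝ × ℝ} (h : Controlled γ u 0 1) :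
    IsAdmissiblePair γ u := by
  have hI : uIcc (0 : ℝ) 1 = Icc 0 1 := uIcc_of_le zero_le_one
  obtain ⟨C, hC⟩ := h.bdd
  refine ⟨?_, ?_, ⟨C, by rwa [hI] at hC⟩, fun t ht => h.eq t (hI ▸ ht)⟩
  · obtain ⟨M, hM⟩ := isCompact_uIcc.exists_bound_of_continuousOn h.cont
    have hv : ∀ s ∈ uIcc (0 : ℝ) 1, ‖velocity γ u s‖ ≤ max 1 |M| * |C| := by
      intro s hs
      have hu : ‖u s‖ ≤ |C| := (hC s hs).trans (le_abs_self C)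
      have hg : ‖γ s‖ ≤ |M| := (hM s hs).trans (le_abs_self M)
      have h1 : ‖(u s).1‖ ≤ |C| := (norm_fst_le (u s)).trans hu
      have h2 : ‖(u s).2‖ ≤ |C| := (norm_snd_le (u s)).trans hu
      have h3 : ‖(γ s).1‖ ≤ |M| := (norm_fst_le (γ s)).trans hg
      refine norm_prod_le_iff.2 ⟨?_, ?_⟩
      · calc ‖(u s).1‖ ≤ 1 * |C| := by simpa using h1
          _ ≤ _ := mul_le_mul_of_nonneg_right (le_max_left _ _) (abs_nonneg C)
      · simp only [velocity, norm_mul]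
        exact mul_le_mul (h3.trans (le_max_right _ _)) h2 (norm_nonneg _) (by positivity)
    refine ⟨(max 1 |M| * |C|).toNNReal, LipschitzOnWith.of_dist_le_mul fun s hs t ht => ?_⟩
    rw [← hI] at hs ht
    have hsub : uIcc t s ⊆ uIcc 0 1 := uIcc_subset_uIcc ht hs
    rw [Real.coe_toNNReal _ (by positivity), dist_eq_norm, Real.dist_eq, h.eq s hs, h.eq t ht,
      add_sub_add_left_eq_sub, intervalIntegral.integral_interval_sub_left
        (h.vel.mono_set (uIcc_subset_uIcc_left hs)) (h.vel.mono_set (uIcc_subset_uIcc_left ht))]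
    exact intervalIntegral.norm_integral_le_of_norm_le_const fun x hx =>
      hv x (hsub (uIoc_subset_uIcc hx))
  · have := (intervalIntegrable_iff' (by finiteness)).1 h.int
    rw [hI] at this
    exact this.aestronglyMeasurable

lemma controlled_of_isAdmissiblePair {γ u : ℝ → ℝ × ℝ} (h : IsAdmissiblePair γ u) :
    Controlled γ u 0 1 := by
  have hI : uIcc (0 : ℝ) 1 = Icc 0 1 := uIcc_of_le zero_le_one
  obtain ⟨⟨K, hK⟩, hm, ⟨C, hC⟩, he⟩ := h
  refine ⟨hI ▸ hK.continuousOn, ?_, ⟨C, hI ▸ hC⟩, fun t ht => he t (hI ▸ ht)⟩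
  rw [intervalIntegrable_iff' (by finiteness), hI]
  exact IntegrableOn.of_bound (by simp) hm C ((ae_restrict_iff' measurableSet_Icc).2
    (Filter.Eventually.of_forall hC))

/-- Some controlled curve on `[0,1]` goes from `a` to `b`, and its control has length `ℓ`. -/
def Reaches (a b : ℝ × ℝ) (ℓ : ℝ) : Prop :=
  ∃ γ u, Controlled γ u 0 1 ∧ γ 0 = a ∧ γ 1 = b ∧ ℓ = ∫ t in (0 : ℝ)..1, speed u t

/-! ### Reversal and concatenation -/

lemma Reaches.symm {a b : ℝ × ℝ} {ℓ : ℝ} (h : Reaches a b ℓ) : Reaches b a ℓ := by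
  obtain ⟨γ, u, h, h0, h1, hl⟩ := h
  refine ⟨_, _, h.swap.affine (c := -1) (d := 1) (p' := 0) (q' := 1) (by norm_num) (by norm_num)
    (by norm_num), by simpa using h1, by simpa using h0, ?_⟩
  have := intervalIntegral.smul_integral_comp_mul_add (a := 0) (b := 1) (speed u) (-1) 1
  rw [speed_affine, intervalIntegral.integral_const_mul, hl, intervalIntegral.integral_symm]
  norm_num at this ⊢
  linarith

lemma Reaches.trans {a b c : ℝ × ℝ} {ℓ₁ ℓ₂ : ℝ} (h : Reaches a b ℓ₁) (h' : Reaches b c ℓ₂) :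
    Reaches a c (ℓ₁ + ℓ₂) := by
  obtain ⟨γ₁, u₁, h₁, ha, hb, hl₁⟩ := h
  obtain ⟨γ₂, u₂, h₂, hb', hc, hl₂⟩ := h'
  have k₁ := h₁.affine (c := 2) (d := 0) (p' := 0) (q' := 1 / 2) (by norm_num) (by norm_num)
    (by norm_num)
  have k₂ := h₂.affine (c := 2) (d := -1) (p' := 1 / 2) (q' := 1) (by norm_num) (by norm_num)
    (by norm_num)
  set v₁ : ℝ → ℝ × ℝ := fun t => (2 : ℝ) • u₁ (2 * t + 0)
  set v₂ : ℝ → ℝ × ℝ := fun t => (2 : ℝ) • u₂ (2 * t + -1)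
  set γ : ℝ → ℝ × ℝ := fun t => if t ≤ 1 / 2 then γ₁ (2 * t + 0) else γ₂ (2 * t + -1) with hγ
  set v : ℝ → ℝ × ℝ := fun t => if t ≤ 1 / 2 then v₁ t else v₂ t with hv
  have e₁ : EqOn v₁ v (uIcc 0 (1 / 2)) := by
    intro t ht
    rw [uIcc_of_le (by norm_num)] at ht
    simp only [hv, if_pos ht.2]
  have e₂ : EqOn v₂ v (uIoc (1 / 2) 1) := by
    intro t ht
    rw [uIoc_of_le (by norm_num)] at ht
    simp only [hv, if_neg (not_le.2 ht.1)]
  have k₁' : Controlled γ v 0 (1 / 2) := by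
    refine k₁.congr ?_ (e₁.mono uIoc_subset_uIcc) ?_
    · intro t ht
      rw [uIcc_of_le (by norm_num)] at ht
      simp only [hγ, if_pos ht.2]
    · obtain ⟨C, hC⟩ := k₁.bdd
      exact ⟨C, fun t ht => e₁ ht ▸ hC t ht⟩
  have k₂' : Controlled γ v (1 / 2) 1 := by
    refine k₂.congr ?_ e₂ ?_
    · intro t ht
      rw [uIcc_of_le (by norm_num)] at ht
      rcases ht.1.eq_or_lt with rfl | hlt
      · norm_num [hγ, hb, hb']
      · simp only [hγ, if_neg (not_le.2 hlt)]
    · obtain ⟨C, hC⟩ := k₂.bdd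
      refine ⟨max C ‖v (1 / 2)‖, fun t ht => ?_⟩
      have ht' := ht
      rw [uIcc_of_le (by norm_num)] at ht'
      rcases ht'.1.eq_or_lt with rfl | hlt
      · exact le_max_right _ _
      · have : v t = v₂ t := if_neg (not_le.2 hlt)
        rw [this]
        exact (hC t ht).trans (le_max_left _ _)
  refine ⟨γ, v, k₁'.glue (by norm_num) (by norm_num) k₂', ?_, ?_, ?_⟩
  · simp [hγ, ha]
  · norm_num [hγ, hc]
  · have i₁ : ∫ t in (0 : ℝ)..1 / 2, speed v t = ℓ₁ := by
      have := intervalIntegral.smul_integral_comp_mul_add (a := 0) (b := 1 / 2) (speed u₁) 2 0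
      rw [intervalIntegral.integral_congr_ae (g := speed v₁) (.of_forall fun t ht => by
        simp only [speed, e₁ (uIoc_subset_uIcc ht)]), speed_affine,
        intervalIntegral.integral_const_mul, hl₁]
      norm_num at this ⊢
      exact this
    have i₂ : ∫ t in (1 / 2 : ℝ)..1, speed v t = ℓ₂ := by
      have := intervalIntegral.smul_integral_comp_mul_add (a := 1 / 2) (b := 1) (speed u₂) 2 (-1)
      rw [intervalIntegral.integral_congr_ae (g := speed v₂) (.of_forall fun t ht => by
        simp only [speed, e₂ ht]), speed_affine,
        intervalIntegral.integral_const_mul, hl₂]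
      norm_num at this ⊢
      exact this
    rw [← i₁, ← i₂, intervalIntegral.integral_add_adjacent_intervals
      (intervalIntegrable_speed k₁'.int) (intervalIntegrable_speed k₂'.int)]

/-! ### Upper bound: horizontal and vertical segments -/

lemma reaches_horizontal (x y k : ℝ) : Reaches (x, y) (x + k, y) |k| := by
  refine ⟨fun t => (x + t * k, y), fun _ => (k, 0),
    ⟨by fun_prop, intervalIntegrable_const, ⟨_, fun _ _ => le_rfl⟩, fun t _ => ?_⟩,
    by simp, by simp, ?_⟩
  · have : velocity (fun t => (x + t * k, y)) (fun _ => (k, 0)) = fun _ => (k, 0) := by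
      funext s; simp [velocity]
    rw [this, intervalIntegral.integral_const]
    simp
  · simp [speed, Real.sqrt_sq_eq_abs]

/-- On the vertical line at abscissa `x` the constant control `(0, k)` moves at velocity `x k`. -/
lemma reaches_vertical (x y k : ℝ) : Reaches (x, y) (x, y + x * k) |k| := by
  refine ⟨fun t => (x, y + t * (x * k)), fun _ => (0, k),
    ⟨by fun_prop, intervalIntegrable_const, ⟨_, fun _ _ => le_rfl⟩, fun t _ => ?_⟩,
    by simp, by simp, ?_⟩
  · have : velocity (fun t => (x, y + t * (x * k))) (fun _ => (0, k)) = fun _ => (0, x * k) := by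
      funext s; simp [velocity]
    rw [this, intervalIntegral.integral_const]
    simp
  · simp [speed, Real.sqrt_sq_eq_abs]

lemma exists_reaches (a b : ℝ × ℝ) :
    ∃ ℓ ≤ |b.1 - a.1| + 3 * Real.sqrt |b.2 - a.2|, Reaches a b ℓ := by
  obtain ⟨x, y⟩ := a
  obtain ⟨x', y'⟩ := b
  simp only
  set r := Real.sqrt |y' - y| with hr
  have hr0 : 0 ≤ r := Real.sqrt_nonneg _
  have hrr : r * r = |y' - y| := Real.mul_self_sqrt (abs_nonneg _)
  -- the horizontal shift has the sign of `x`, so that it moves away from the singular line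
  obtain ⟨s, hs, hxs⟩ : ∃ s, |s| = r ∧ r ≤ |x + s| := by
    rcases le_total 0 x with hx | hx
    · exact ⟨r, abs_of_nonneg hr0, by rw [abs_of_nonneg (by positivity)]; linarith⟩
    · exact ⟨-r, by rw [abs_neg, abs_of_nonneg hr0], by
        rw [abs_of_nonpos (by linarith)]; linarith⟩
  obtain ⟨k, hk, hkr⟩ : ∃ k, (x + s) * k = y' - y ∧ |k| ≤ r := by
    rcases eq_or_ne (x + s) 0 with h0 | h0
    · have : r = 0 := le_antisymm (by simpa [h0] using hxs) hr0
      rw [this, mul_zero] at hrr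
      exact ⟨0, by rw [mul_zero, abs_eq_zero.1 hrr.symm], by simpa using hr0⟩
    · refine ⟨(y' - y) / (x + s), by field_simp, ?_⟩
      rw [abs_div, ← hrr, div_le_iff₀ (abs_pos.2 h0)]
      exact mul_le_mul_of_nonneg_left hxs hr0
  have h := ((reaches_horizontal x y s).trans (reaches_vertical (x + s) y k)).trans
    (reaches_horizontal (x + s) (y + (x + s) * k) (x' - (x + s)))
  rw [show x + s + (x' - (x + s)) = x' by ring, show y + (x + s) * k = y' by rw [hk]; ring] at h
  refine ⟨_, ?_, h⟩
  have : |x' - (x + s)| ≤ |x' - x| + |s| := by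
    rw [← sub_sub]; exact abs_sub _ _
  linarith

/-! ### Lower bound -/

lemma Reaches.lower {a b : ℝ × ℝ} {ℓ : ℝ} (h : Reaches a b ℓ) :
    0 ≤ ℓ ∧ |b.1 - a.1| ≤ ℓ ∧ |b.2 - a.2| ≤ (|a.1| + ℓ) * ℓ := by
  obtain ⟨γ, u, h, rfl, rfl, rfl⟩ := h
  set ℓ := ∫ t in (0 : ℝ)..1, speed u t with hℓ
  have hsp := intervalIntegrable_speed h.int
  have hI : uIcc (0 : ℝ) 1 = Icc 0 1 := uIcc_of_le zero_le_one
  have hfst : ∀ t ∈ Icc (0 : ℝ) 1, |(γ t).1 - (γ 0).1| ≤ ℓ := by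
    intro t ht
    have hsub : uIcc 0 t ⊆ uIcc 0 1 := uIcc_subset_uIcc_left (hI ▸ ht)
    have e : (γ t).1 - (γ 0).1 = ∫ s in (0 : ℝ)..t, (u s).1 := by
      rw [h.eq t (hI ▸ ht), Prod.fst_add, add_sub_cancel_left,
        intervalIntegral.integral_of_le ht.1, intervalIntegral.integral_of_le ht.1,
        fst_integral (h.vel.mono_set hsub).1]
      rfl
    calc |(γ t).1 - (γ 0).1| ≤ ∫ s in (0 : ℝ)..t, speed u s := by
          rw [e, ← Real.norm_eq_abs]
          exact intervalIntegral.norm_integral_le_of_norm_le ht.1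
            (Filter.Eventually.of_forall fun s _ => abs_fst_le_speed u s) (hsp.mono_set hsub)
      _ ≤ ℓ := intervalIntegral.integral_mono_interval le_rfl ht.1 ht.2
          (Filter.Eventually.of_forall (speed_nonneg u)) hsp
  refine ⟨intervalIntegral.integral_nonneg zero_le_one fun t _ => speed_nonneg u t,
    hfst 1 (by simp), ?_⟩
  have e : (γ 1).2 - (γ 0).2 = ∫ s in (0 : ℝ)..1, (γ s).1 * (u s).2 := by
    rw [h.eq 1 right_mem_uIcc, Prod.snd_add, add_sub_cancel_left,
      intervalIntegral.integral_of_le zero_le_one, intervalIntegral.integral_of_le zero_le_one,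
      snd_integral h.vel.1]
    rfl
  rw [e, hℓ, ← intervalIntegral.integral_const_mul, ← hℓ, ← Real.norm_eq_abs]
  refine intervalIntegral.norm_integral_le_of_norm_le zero_le_one
    (Filter.Eventually.of_forall fun s hs => ?_) (hsp.const_mul _)
  rw [norm_mul]
  refine mul_le_mul ?_ (abs_snd_le_speed u s) (norm_nonneg _) ?_
  · have h1 := hfst s (Ioc_subset_Icc_self hs)
    have h2 := abs_sub_abs_le_abs_sub (γ s).1 (γ 0).1
    rw [Real.norm_eq_abs]
    linarith
  · exact add_nonneg (abs_nonneg _)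
      (intervalIntegral.integral_nonneg zero_le_one fun t _ => speed_nonneg u t)

/-! ### The Grushin distance as an infimum over controlled curves -/

lemma Controlled.curveLength_le {γ u : ℝ → ℝ × ℝ} (h : Controlled γ u 0 1) :
    curveLength γ ≤ ∫ t in (0 : ℝ)..1, speed u t := by
  refine csInf_le ⟨0, ?_⟩ ⟨u, h.isAdmissiblePair, rfl⟩
  rintro _ ⟨v, -, rfl⟩
  exact intervalIntegral.integral_nonneg zero_le_one fun t _ => speed_nonneg v t

lemma curveLength_nonneg (γ : ℝ → ℝ × ℝ) : 0 ≤ curveLength γ := by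
  refine Real.sInf_nonneg ?_
  rintro _ ⟨v, -, rfl⟩
  exact intervalIntegral.integral_nonneg zero_le_one fun t _ => speed_nonneg v t

lemma grushinSet_nonempty (a b : ℝ × ℝ) :
    {L | ∃ γ, IsAdmissible γ ∧ γ 0 = a ∧ γ 1 = b ∧ L = curveLength γ}.Nonempty := by
  obtain ⟨-, -, γ, u, h, h0, h1, -⟩ := exists_reaches a b
  exact ⟨_, γ, ⟨u, h.isAdmissiblePair⟩, h0, h1, rfl⟩

lemma Reaches.grushinDist_le {a b : ℝ × ℝ} {ℓ : ℝ} (h : Reaches a b ℓ) :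
    grushinDist a b ≤ ℓ := by
  obtain ⟨γ, u, h, h0, h1, rfl⟩ := h
  refine le_trans ?_ h.curveLength_le
  refine csInf_le ⟨0, ?_⟩ ⟨γ, ⟨u, h.isAdmissiblePair⟩, h0, h1, rfl⟩
  rintro _ ⟨γ', -, -, -, rfl⟩
  exact curveLength_nonneg γ'

lemma exists_reaches_lt {a b : ℝ × ℝ} {r : ℝ} (h : grushinDist a b < r) :
    ∃ ℓ < r, Reaches a b ℓ := by
  obtain ⟨_, ⟨γ, ⟨u, hu⟩, h0, h1, rfl⟩, hlt⟩ := exists_lt_of_csInf_lt (grushinSet_nonempty a b) h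
  unfold curveLength at hlt
  obtain ⟨_, ⟨v, hv, rfl⟩, hlt'⟩ := exists_lt_of_csInf_lt (by exact ⟨_, u, hu, rfl⟩) hlt
  exact ⟨_, hlt', γ, v, controlled_of_isAdmissiblePair hv, h0, h1, rfl⟩

lemma grushinDist_upper (a b : ℝ × ℝ) :
    grushinDist a b ≤ |b.1 - a.1| + 3 * Real.sqrt |b.2 - a.2| := by
  obtain ⟨ℓ, hℓ, h⟩ := exists_reaches a b
  exact h.grushinDist_le.trans hℓ

lemma grushinDist_lower {a b : ℝ × ℝ} {r : ℝ} (h : grushinDist a b < r) :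
    |b.1 - a.1| < r ∧ |b.2 - a.2| ≤ (|a.1| + r) * r := by
  obtain ⟨ℓ, hℓ, h⟩ := exists_reaches_lt h
  obtain ⟨h0, h1, h2⟩ := h.lower
  refine ⟨h1.trans_lt hℓ, h2.trans ?_⟩
  have := abs_nonneg a.1
  have : 0 ≤ |a.1| + r := by linarith
  gcongr

lemma grushinDist_symm_le (a b : ℝ × ℝ) : grushinDist a b ≤ grushinDist b a := by
  refine le_of_forall_gt_imp_ge_of_dense fun r hr => ?_
  obtain ⟨ℓ, hℓ, h⟩ := exists_reaches_lt (a := b) (b := a) hr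
  exact h.symm.grushinDist_le.trans hℓ.le

lemma grushinDist_triangle (a b c : ℝ × ℝ) :
    grushinDist a c ≤ grushinDist a b + grushinDist b c := by
  refine le_of_forall_pos_le_add fun ε hε => ?_
  obtain ⟨ℓ₁, hℓ₁, h₁⟩ :=
    exists_reaches_lt (lt_add_of_pos_right (grushinDist a b) (half_pos hε))
  obtain ⟨ℓ₂, hℓ₂, h₂⟩ :=
    exists_reaches_lt (lt_add_of_pos_right (grushinDist b c) (half_pos hε))
  have := (h₁.trans h₂).grushinDist_le
  linarith

lemma grushinDist_nonneg (a b : ℝ × ℝ) : 0 ≤ grushinDist a b := by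
  refine Real.sInf_nonneg ?_
  rintro _ ⟨γ, -, -, -, rfl⟩
  exact curveLength_nonneg γ

lemma grushinDist_self (a : ℝ × ℝ) : grushinDist a a = 0 :=
  le_antisymm (by simpa using grushinDist_upper a a) (grushinDist_nonneg a a)

/-! ### Comparison of balls -/

/-- Small Grushin balls lie in Euclidean balls. -/
lemma exists_dist_lt (a : ℝ × ℝ) {ε : ℝ} (hε : 0 < ε) :
    ∃ δ > 0, ∀ b, grushinDist a b < δ → dist b a < ε := by
  have hpos : 0 < |a.1| + 1 := by positivity
  -- with `δ ≤ 1`, the vertical displacement is at most `(|a.1| + 1) δ ≤ ε / 2`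
  refine ⟨min (min 1 ε) (ε / (2 * (|a.1| + 1))), by positivity, fun b hb => ?_⟩
  set δ := min (min 1 ε) (ε / (2 * (|a.1| + 1)))
  have hδ0 : 0 < δ := by positivity
  have hδ1 : δ ≤ 1 := (min_le_left _ _).trans (min_le_left _ _)
  have hδε : δ ≤ ε := (min_le_left _ _).trans (min_le_right _ _)
  have hδ2 : δ * (2 * (|a.1| + 1)) ≤ ε := (le_div_iff₀ (by positivity)).1 (min_le_right _ _)
  obtain ⟨h1, h2⟩ := grushinDist_lower hb
  rw [Prod.dist_eq, max_lt_iff, Real.dist_eq, Real.dist_eq]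
  refine ⟨h1.trans_le hδε, ?_⟩
  have : (|a.1| + δ) * δ ≤ (|a.1| + 1) * δ := by gcongr
  linarith

/-- Small Euclidean balls lie in Grushin balls. -/
lemma exists_grushinDist_lt (a : ℝ × ℝ) {ε : ℝ} (hε : 0 < ε) :
    ∃ δ > 0, ∀ b, dist b a < δ → grushinDist a b < ε := by
  have hc : Continuous fun b : ℝ × ℝ => |b.1 - a.1| + 3 * Real.sqrt |b.2 - a.2| := by fun_prop
  obtain ⟨δ, hδ, h⟩ := Metric.continuous_iff.1 hc a ε hε
  refine ⟨δ, hδ, fun b hb => (grushinDist_upper a b).trans_lt ?_⟩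
  have := h b hb
  simp only [sub_self, abs_zero, Real.sqrt_zero, mul_zero, add_zero, Real.dist_eq, sub_zero] at this
  exact (le_abs_self _).trans_lt this

end Grushin

open Grushin in
theorem stmt_9 :
    (∀ a b : ℝ × ℝ,
      {L | ∃ γ, IsAdmissible γ ∧ γ 0 = a ∧ γ 1 = b ∧ L = curveLength γ}.Nonempty) ∧
    (∀ a b : ℝ × ℝ, grushinDist a b = 0 ↔ a = b) ∧
    (∀ a b : ℝ × ℝ, grushinDist a b = grushinDist b a) ∧
    (∀ a b c : ℝ × ℝ, grushinDist a c ≤ grushinDist a b + grushinDist b c) ∧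
    (∀ S : Set (ℝ × ℝ), IsOpen S ↔
      ∀ a ∈ S, ∃ ε > (0 : ℝ), ∀ b, grushinDist a b < ε → b ∈ S) := by
  refine ⟨grushinSet_nonempty, fun a b => ⟨fun h => ?_, ?_⟩,
    fun a b => le_antisymm (grushinDist_symm_le a b) (grushinDist_symm_le b a),
    grushinDist_triangle, fun S => ?_⟩
  · refine (eq_of_forall_dist_le fun ε hε => ?_).symm
    obtain ⟨δ, hδ, hb⟩ := exists_dist_lt a hε
    exact (hb b (h ▸ hδ)).le
  · rintro rfl
    exact grushinDist_self a
  · rw [Metric.isOpen_iff]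
    constructor
    · intro hS a ha
      obtain ⟨ε, hε, hball⟩ := hS a ha
      obtain ⟨δ, hδ, hb⟩ := exists_dist_lt a hε
      exact ⟨δ, hδ, fun b hab => hball (hb b hab)⟩
    · -- Grushin balls need not be known to be open: each point of `S` is treated as a centre
      intro hS a ha
      obtain ⟨ε, hε, hball⟩ := hS a ha
      obtain ⟨δ, hδ, hb⟩ := exists_grushinDist_lt a hε
      exact ⟨δ, hδ, fun b hab => hball b (hb b hab)⟩
end

section
/- For all points a = (x_a, y_a) and b = (x_b, y_b) in ℝ² with max(|x_a|, |x_b|) > 0, one has d(a,b) ≤ |x_a − x_b| + |y_a − y_b| / max(|x_a|, |x_b|). -/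
/-!
The vertical line through the endpoint with larger `|x|` can be travelled over a height `h` at cost
`h / max |a.1| |b.1|`, since the first coordinate is constant along it. Joining `a` to `b` by a vertical segment on that
line and a horizontal segment (in whichever order the endpoints force) gives an admissible curve with a
control whose cost equals the right-hand side. Such curves have piecewise constant velocity and a piecewise
constant control, so `integral_step` computes every integral involved; `isAdmissiblePair_broken`
gives their admissibility, and `grushinDist_le_of_pair` bounds the distance by the cost of any one
control, all the infima being taken over sets of nonnegative reals.
-/

open MeasureTheory Set

/-- The step function with value `α` up to time `1/2` and `β` afterwards. -/
noncomputable def stepFun {E : Type*} (α β : E) (s : ℝ) : E := if s ≤ 1 / 2 then α else β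

/-- The broken line from `a` with velocity `α` up to time `1/2` and `β` afterwards. -/
noncomputable def brokenLine (a α β : ℝ × ℝ) (t : ℝ) : ℝ × ℝ :=
  a + (min t (1 / 2) • α + max (t - 1 / 2) 0 • β)

lemma integral_step {E : Type*} [NormedAddCommGroup E] [NormedSpace ℝ E] [CompleteSpace E]
    (α β : E) (t : ℝ) :
    ∫ s in (0 : ℝ)..t, stepFun α β s = min t (1 / 2) • α + max (t - 1 / 2) 0 • β := by
  have left : ∀ t : ℝ, t ≤ 1 / 2 → EqOn (stepFun α β) (fun _ => α) (uIoc 0 t) := by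
    intro t ht s hs
    rw [mem_uIoc] at hs
    have : s ≤ 1 / 2 := by rcases hs with hs | hs <;> linarith [hs.2]
    simp only [stepFun, if_pos this]
  rcases le_total t (1 / 2) with ht | ht
  · rw [min_eq_left ht, max_eq_right (by linarith), intervalIntegral.integral_congr_ae (ae_of_all _ (left t ht))]
    simp
  · have right : EqOn (stepFun α β) (fun _ => β) (uIoc (1 / 2) t) := by
      intro s hs
      rw [uIoc_of_le ht] at hs
      simp only [stepFun, if_neg (not_le.2 hs.1)]
    have i1 : IntervalIntegrable (stepFun α β) volume 0 (1 / 2) :=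
      (intervalIntegrable_const (c := α)).congr (left _ le_rfl).symm
    have i2 : IntervalIntegrable (stepFun α β) volume (1 / 2) t :=
      (intervalIntegrable_const (c := β)).congr right.symm
    rw [min_eq_right ht, max_eq_left (by linarith),
      ← intervalIntegral.integral_add_adjacent_intervals i1 i2,
      intervalIntegral.integral_congr_ae (ae_of_all _ (left _ le_rfl)),
      intervalIntegral.integral_congr_ae (ae_of_all _ right)]
    simp

/-- The control `stepFun v w` drives a broken line as soon as `x · v.2` and `x · w.2` are constant
along the respective halves, equal to the vertical velocities `e` and `f`. -/
lemma isAdmissiblePair_broken (a v w : ℝ × ℝ) (e f : ℝ)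
    (h1 : ∀ t : ℝ, 0 ≤ t → t ≤ 1 / 2 → (a.1 + t * v.1) * v.2 = e)
    (h2 : ∀ t : ℝ, 1 / 2 < t → (a.1 + (1 / 2 * v.1 + (t - 1 / 2) * w.1)) * w.2 = f) :
    IsAdmissiblePair (brokenLine a (v.1, e) (w.1, f)) (stepFun v w) := by
  refine ⟨⟨‖(v.1, e)‖₊ + ‖(w.1, f)‖₊, LipschitzWith.lipschitzOnWith ?_⟩, ?_, ?_, ?_⟩
  · refine LipschitzWith.of_dist_le_mul fun s t => ?_
    have e1 : |min s (1 / 2) - min t (1 / 2)| ≤ |s - t| := by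
      simpa using abs_min_sub_min_le_max s (1 / 2) t (1 / 2)
    have e2 : |max (s - 1 / 2) 0 - max (t - 1 / 2) 0| ≤ |s - t| := by
      simpa using abs_max_sub_max_le_max (s - 1 / 2) 0 (t - 1 / 2) 0
    have e3 : brokenLine a (v.1, e) (w.1, f) s - brokenLine a (v.1, e) (w.1, f) t
        = (min s (1 / 2) - min t (1 / 2)) • (v.1, e)
          + (max (s - 1 / 2) 0 - max (t - 1 / 2) 0) • (w.1, f) := by
      simp only [brokenLine, sub_smul]; abel
    rw [dist_eq_norm, e3, Real.dist_eq, NNReal.coe_add, coe_nnnorm, coe_nnnorm, add_mul]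
    refine (norm_add_le _ _).trans (add_le_add ?_ ?_)
    · rw [norm_smul, Real.norm_eq_abs, mul_comm]; gcongr
    · rw [norm_smul, Real.norm_eq_abs, mul_comm]; gcongr
  · exact (StronglyMeasurable.ite measurableSet_Iic stronglyMeasurable_const
      stronglyMeasurable_const).aestronglyMeasurable
  · refine ⟨max ‖v‖ ‖w‖, fun t _ => ?_⟩
    unfold stepFun
    split_ifs
    exacts [le_max_left _ _, le_max_right _ _]
  · intro t ht
    have key : EqOn (fun s => (((stepFun v w s).1,
        (brokenLine a (v.1, e) (w.1, f) s).1 * (stepFun v w s).2) : ℝ × ℝ))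
        (stepFun (v.1, e) (w.1, f)) (uIoc 0 t) := by
      intro s hs
      rw [uIoc_of_le ht.1] at hs
      rcases le_or_gt s (1 / 2) with hs' | hs'
      · have := h1 s hs.1.le hs'
        simp only [stepFun, if_pos hs', brokenLine, min_eq_left hs',
          max_eq_right (sub_nonpos.2 hs')]
        simpa using this
      · have := h2 s hs'
        simp only [stepFun, if_neg (not_le.2 hs'), brokenLine, min_eq_right hs'.le,
          max_eq_left (sub_nonneg.2 hs'.le)]
        simpa using this
    rw [intervalIntegral.integral_congr_ae (ae_of_all _ key), integral_step]
    simp [brokenLine]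

lemma curveLength_nonneg (γ : ℝ → ℝ × ℝ) : 0 ≤ curveLength γ := by
  refine Real.sInf_nonneg ?_
  rintro _ ⟨u, -, rfl⟩
  exact intervalIntegral.integral_nonneg zero_le_one fun _ _ => Real.sqrt_nonneg _

lemma grushinDist_le_of_pair {γ u : ℝ → ℝ × ℝ} (h : IsAdmissiblePair γ u) :
    grushinDist (γ 0) (γ 1) ≤ ∫ t in (0 : ℝ)..1, Real.sqrt ((u t).1 ^ 2 + (u t).2 ^ 2) := by
  have h1 : grushinDist (γ 0) (γ 1) ≤ curveLength γ := by
    refine csInf_le ⟨0, ?_⟩ ⟨γ, ⟨u, h⟩, rfl, rfl, rfl⟩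
    rintro _ ⟨γ', -, -, -, rfl⟩
    exact curveLength_nonneg γ'
  refine h1.trans (csInf_le ⟨0, ?_⟩ ⟨u, h, rfl⟩)
  rintro _ ⟨u', -, rfl⟩
  exact intervalIntegral.integral_nonneg zero_le_one fun _ _ => Real.sqrt_nonneg _

/-- The cost of joining `a` to `b` by a broken line with control `v` on the first half of the time
interval and `w` on the second; `hx` and `hy` say that the line ends at `b`. -/
lemma grushinDist_broken_le (a b v w : ℝ × ℝ) (e f : ℝ)
    (h1 : ∀ t : ℝ, 0 ≤ t → t ≤ 1 / 2 → (a.1 + t * v.1) * v.2 = e)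
    (h2 : ∀ t : ℝ, 1 / 2 < t → (a.1 + (1 / 2 * v.1 + (t - 1 / 2) * w.1)) * w.2 = f)
    (hx : a.1 + (v.1 + w.1) / 2 = b.1) (hy : a.2 + (e + f) / 2 = b.2) :
    grushinDist a b ≤
      (Real.sqrt (v.1 ^ 2 + v.2 ^ 2) + Real.sqrt (w.1 ^ 2 + w.2 ^ 2)) / 2 := by
  have h := grushinDist_le_of_pair (isAdmissiblePair_broken a v w e f h1 h2)
  have h0 : brokenLine a (v.1, e) (w.1, f) 0 = a := by
    norm_num [brokenLine]
  have hb : brokenLine a (v.1, e) (w.1, f) 1 = b := by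
    have m1 : min (1 : ℝ) (1 / 2) = 1 / 2 := by norm_num
    have m2 : max (1 - 1 / 2 : ℝ) 0 = 1 / 2 := by norm_num
    ext
    · simp only [brokenLine, m1, m2, Prod.fst_add, Prod.smul_fst, smul_eq_mul]; linarith
    · simp only [brokenLine, m1, m2, Prod.snd_add, Prod.smul_snd, smul_eq_mul]; linarith
  have hs : (fun t => Real.sqrt ((stepFun v w t).1 ^ 2 + (stepFun v w t).2 ^ 2))
      = stepFun (Real.sqrt (v.1 ^ 2 + v.2 ^ 2)) (Real.sqrt (w.1 ^ 2 + w.2 ^ 2)) := by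
    funext t
    unfold stepFun
    split_ifs <;> rfl
  rw [h0, hb, hs, integral_step] at h
  norm_num at h
  linarith

theorem stmt_12 (a b : ℝ × ℝ) (h : 0 < max |a.1| |b.1|) :
    grushinDist a b ≤ |a.1 - b.1| + |a.2 - b.2| / max |a.1| |b.1| := by
  rcases le_total |b.1| |a.1| with hab | hab
  · -- vertical segment on the line through `a`, then horizontal segment
    rw [max_eq_left hab] at h ⊢
    have ha : a.1 ≠ 0 := abs_pos.1 h
    refine (grushinDist_broken_le a b (0, 2 * (b.2 - a.2) / a.1) (2 * (b.1 - a.1), 0)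
      (2 * (b.2 - a.2)) 0 ?_ ?_ ?_ ?_).trans (le_of_eq ?_)
    · intro t _ _
      simp only; field_simp; ring
    · intro t _
      simp
    · simp
    · simp
    · simp only [ne_eq, OfNat.ofNat_ne_zero, not_false_eq_true, zero_pow, zero_add, add_zero,
        Real.sqrt_sq_eq_abs, abs_div, abs_mul, abs_two]
      rw [abs_sub_comm b.1, abs_sub_comm b.2]; ring
  · -- horizontal segment, then vertical segment on the line through `b`
    rw [max_eq_right hab] at h ⊢
    have hb : b.1 ≠ 0 := abs_pos.1 h
    refine (grushinDist_broken_le a b (2 * (b.1 - a.1), 0) (0, 2 * (b.2 - a.2) / b.1)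
      0 (2 * (b.2 - a.2)) ?_ ?_ ?_ ?_).trans (le_of_eq ?_)
    · intro t _ _
      simp
    · intro t _
      simp only; field_simp; ring
    · simp
    · simp
    · simp only [ne_eq, OfNat.ofNat_ne_zero, not_false_eq_true, zero_pow, zero_add, add_zero,
        Real.sqrt_sq_eq_abs, abs_div, abs_mul, abs_two]
      rw [abs_sub_comm b.1, abs_sub_comm b.2]; ring
end

section
/- If γ = (γ₁, γ₂) : [0,1] → ℝ² is a geodesic of the Grushin distance d, then min(γ₂(0), γ₂(1)) ≤ γ₂(t) ≤ max(γ₂(0), γ₂(1)) for all t ∈ [0,1]; that is, geodesics remain in the horizontal strip determined by the y-coordinates of their endpoints. -/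
open MeasureTheory Set

/-!
Let `p = γ t` and suppose that `p` lies strictly above (or strictly below) the strip. Let `M` be the
nearest height of the strip and `p' = (p₁, M)`. The point is that

* `d(a, p') < d(a, p)` whenever `M` lies between `a₂` and `p₂` and `M ≠ p₂`
  (`grushinDist_lt_of_mem_uIcc`).

Applied to `a = γ 0` and to `a = γ 1`, together with the triangle inequality, this gives
`d(γ 0, γ 1) < d(γ 0, p) + d(γ 1, p)`, whereas the geodesic equation says that these are equal.

For the strict inequality, take an almost optimal curve from `a` to `p` and a time `τ` at which it
has height `M`. Setting the vertical control to zero after `τ` gives an admissible curve from `a` to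
`p'`. The discarded vertical control has integral at least `q = |p₂ - M| / R`, where `R` bounds `|x|`
along the curve, and `abs_le_speed_sub` turns this into a saving of length that depends only on `q`
and on an upper bound for the length (`IsControlled.dist_freeze_le`). Since the saving is uniform over
almost optimal curves, neither existence nor regularity of minimisers is needed.

As the distance is an infimum of reals, with value `0` on the empty set, one also needs that any two
points are joined by an admissible curve (`exists_controlled`).
-/

/-! ### Controlled curves -/

/-- Scalar form of an admissible pair `((x, y), (v, w))`, with all data extended to the whole
line: the coordinates are continuous, the control is measurable and bounded everywhere, and
`x' = v`, `y' = x w` holds in integral form on `[0,1]`. -/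
structure IsControlled (x y v w : ℝ → ℝ) : Prop where
  cx : Continuous x
  cy : Continuous y
  mv : AEStronglyMeasurable v volume
  mw : AEStronglyMeasurable w volume
  bd : ∃ C, ∀ t, |v t| ≤ C ∧ |w t| ≤ C
  hx : ∀ t ∈ Icc (0 : ℝ) 1, x t = x 0 + ∫ s in (0 : ℝ)..t, v s
  hy : ∀ t ∈ Icc (0 : ℝ) 1, y t = y 0 + ∫ s in (0 : ℝ)..t, x s * w s

lemma intervalIntegrable_of_bdd {f : ℝ → ℝ} (hf : AEStronglyMeasurable f volume)
    {C : ℝ} (hC : ∀ t, |f t| ≤ C) (a b : ℝ) : IntervalIntegrable f volume a b :=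
  (intervalIntegrable_const (c := C)).mono_fun hf.restrict
    (ae_of_all _ fun t => by
      simpa using (hC t).trans (le_abs_self C))

namespace IsControlled

variable {x y v w : ℝ → ℝ}

lemma integrable_v (h : IsControlled x y v w) (a b : ℝ) : IntervalIntegrable v volume a b := by
  obtain ⟨C, hC⟩ := h.bd
  exact intervalIntegrable_of_bdd h.mv (fun t => (hC t).1) a b

lemma integrable_w (h : IsControlled x y v w) (a b : ℝ) : IntervalIntegrable w volume a b := by
  obtain ⟨C, hC⟩ := h.bd
  exact intervalIntegrable_of_bdd h.mw (fun t => (hC t).2) a b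

lemma integrable_xw (h : IsControlled x y v w) (a b : ℝ) :
    IntervalIntegrable (fun s => x s * w s) volume a b :=
  (h.integrable_w a b).continuousOn_mul h.cx.continuousOn

lemma integrable_speed (h : IsControlled x y v w) (a b : ℝ) :
    IntervalIntegrable (fun s => √(v s ^ 2 + w s ^ 2)) volume a b := by
  obtain ⟨C, hC⟩ := h.bd
  refine intervalIntegrable_of_bdd (C := √(C ^ 2 + C ^ 2)) ?_ (fun t => ?_) a b
  · exact Real.continuous_sqrt.comp_aestronglyMeasurable ((h.mv.pow 2).add (h.mw.pow 2))
  · rw [abs_of_nonneg (Real.sqrt_nonneg _)]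
    apply Real.sqrt_le_sqrt
    have h1 := hC t
    exact add_le_add (sq_le_sq' (by linarith [neg_abs_le (v t)]) (by linarith [le_abs_self (v t)]))
      (sq_le_sq' (by linarith [neg_abs_le (w t)]) (by linarith [le_abs_self (w t)]))

end IsControlled

/-! ### The distance as an infimum over controlled curves -/

lemma length_nonneg (u : ℝ → ℝ × ℝ) :
    0 ≤ ∫ t in (0 : ℝ)..1, √((u t).1 ^ 2 + (u t).2 ^ 2) :=
  intervalIntegral.integral_nonneg zero_le_one fun _ _ => Real.sqrt_nonneg _

lemma grushinDist_nonneg (a b : ℝ × ℝ) : 0 ≤ grushinDist a b := by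
  apply Real.sInf_nonneg
  rintro _ ⟨γ, -, -, -, rfl⟩
  exact curveLength_nonneg γ

lemma IsAdmissiblePair.dist_le {γ u : ℝ → ℝ × ℝ} (h : IsAdmissiblePair γ u) :
    grushinDist (γ 0) (γ 1) ≤ ∫ t in (0 : ℝ)..1, √((u t).1 ^ 2 + (u t).2 ^ 2) := by
  refine le_trans (csInf_le ⟨0, ?_⟩ ⟨γ, ⟨u, h⟩, rfl, rfl, rfl⟩) (csInf_le ⟨0, ?_⟩ ⟨u, h, rfl⟩)
  · rintro _ ⟨γ, -, -, -, rfl⟩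
    exact curveLength_nonneg γ
  · rintro _ ⟨u, -, rfl⟩
    exact length_nonneg u

lemma intervalIntegral_prod {f g : ℝ → ℝ} {a b : ℝ} (hf : IntervalIntegrable f volume a b)
    (hg : IntervalIntegrable g volume a b) :
    ∫ s in a..b, ((f s, g s) : ℝ × ℝ) = (∫ s in a..b, f s, ∫ s in a..b, g s) := by
  simp only [intervalIntegral]
  rw [integral_pair hf.1 hg.1, integral_pair hf.2 hg.2]
  rfl

lemma IsControlled.isAdmissiblePair {x y v w : ℝ → ℝ} (h : IsControlled x y v w) :
    IsAdmissiblePair (fun t => (x t, y t)) (fun t => (v t, w t)) := by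
  obtain ⟨C, hC⟩ := h.bd
  have hC0 : 0 ≤ C := (abs_nonneg _).trans (hC 0).1
  obtain ⟨R, hR⟩ := isCompact_Icc.exists_bound_of_continuousOn (h.cx.continuousOn (s := Icc 0 1))
  have hR0 : 0 ≤ R := (norm_nonneg _).trans (hR 0 (by simp))
  refine ⟨⟨⟨max C (R * C), le_max_of_le_left hC0⟩, LipschitzOnWith.of_dist_le_mul ?_⟩,
    (h.mv.prodMk h.mw).restrict, ⟨C, fun t _ => max_le (hC t).1 (hC t).2⟩, fun t ht => ?_⟩
  · intro s hs t ht
    have hst : uIoc t s ⊆ Icc 0 1 := uIoc_subset_uIcc.trans (uIcc_subset_Icc ht hs)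
    have e1 : x s - x t = ∫ r in t..s, v r := by
      rw [h.hx s hs, h.hx t ht, add_sub_add_left_eq_sub,
        intervalIntegral.integral_interval_sub_left (h.integrable_v _ _) (h.integrable_v _ _)]
    have e2 : y s - y t = ∫ r in t..s, x r * w r := by
      rw [h.hy s hs, h.hy t ht, add_sub_add_left_eq_sub,
        intervalIntegral.integral_interval_sub_left (h.integrable_xw _ _) (h.integrable_xw _ _)]
    have b1 : |x s - x t| ≤ C * |s - t| := by
      rw [e1, ← Real.norm_eq_abs]
      exact intervalIntegral.norm_integral_le_of_norm_le_const fun r _ => (hC r).1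
    have b2 : |y s - y t| ≤ (R * C) * |s - t| := by
      rw [e2, ← Real.norm_eq_abs]
      refine intervalIntegral.norm_integral_le_of_norm_le_const fun r hr => ?_
      rw [norm_mul]
      exact mul_le_mul (hR r (hst hr)) (hC r).2 (norm_nonneg _) hR0
    rw [Prod.dist_eq, Real.dist_eq, Real.dist_eq, Real.dist_eq]
    refine max_le (b1.trans ?_) (b2.trans ?_)
    · exact mul_le_mul_of_nonneg_right (le_max_left _ _) (abs_nonneg _)
    · exact mul_le_mul_of_nonneg_right (le_max_right _ _) (abs_nonneg _)
  · simp only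
    rw [intervalIntegral_prod (h.integrable_v _ _) (h.integrable_xw _ _), h.hx t ht, h.hy t ht]
    rfl

lemma IsControlled.dist_le {x y v w : ℝ → ℝ} (h : IsControlled x y v w) :
    grushinDist (x 0, y 0) (x 1, y 1) ≤ ∫ t in (0 : ℝ)..1, √(v t ^ 2 + w t ^ 2) :=
  h.isAdmissiblePair.dist_le

/-- Any two points are joined by a smooth curve with `y' = k x²`, where `x` is a quadratic with
`x (1/2) = 1` (so that `∫ x² > 0`) and `k` is tuned to reach the right height. -/
lemma exists_controlled (a b : ℝ × ℝ) :
    ∃ x y v w, IsControlled x y v w ∧ (x 0, y 0) = a ∧ (x 1, y 1) = b := by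
  obtain ⟨a₁, a₂⟩ := a
  obtain ⟨b₁, b₂⟩ := b
  set c := 4 * (1 - (a₁ + b₁) / 2) with hc
  set x : ℝ → ℝ := fun t => a₁ + (b₁ - a₁) * t + c * (t * (1 - t)) with hxdef
  have cx : Continuous x := by fun_prop
  have hI : 0 < ∫ s in (0 : ℝ)..1, x s * x s := by
    refine intervalIntegral.integral_pos zero_lt_one (by fun_prop)
      (fun s _ => mul_self_nonneg _) ⟨1 / 2, by norm_num, ?_⟩
    have : x (1 / 2) = 1 := by simp only [hxdef, hc]; ring
    rw [this]; norm_num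
  set I := ∫ s in (0 : ℝ)..1, x s * x s
  set k := (b₂ - a₂) / I
  -- Outside `[0,1]` the control has to stay bounded, hence the clamping.
  let p : ℝ → ℝ := fun t => max 0 (min 1 t)
  have cp : Continuous p := by fun_prop
  have hp : ∀ t, p t ∈ Icc (0 : ℝ) 1 := fun t => ⟨le_max_left _ _, max_le zero_le_one (min_le_left _ _)⟩
  have hpt : ∀ t ∈ Icc (0 : ℝ) 1, p t = t := fun t ht => by
    simp only [p]; rw [min_eq_right ht.2, max_eq_right ht.1]
  let x' : ℝ → ℝ := fun t => (b₁ - a₁) + c * (1 - 2 * t)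
  have cx' : Continuous x' := by fun_prop
  have key : ∀ f : ℝ → ℝ, ∀ t ∈ Icc (0 : ℝ) 1,
      ∫ s in (0 : ℝ)..t, f (p s) = ∫ s in (0 : ℝ)..t, f s := by
    intro f t ht
    refine intervalIntegral.integral_congr fun s hs => ?_
    rw [hpt s (uIcc_subset_Icc (by simp) ht hs)]
  refine ⟨x, fun t => a₂ + ∫ s in (0 : ℝ)..t, x s * (k * x s), fun t => x' (p t),
    fun t => k * x (p t), ⟨cx, ?_, ?_, ?_, ?_, ?_, ?_⟩, ?_, ?_⟩
  · exact continuous_const.add (intervalIntegral.continuous_primitive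
      (fun _ _ => (by fun_prop : Continuous _).intervalIntegrable _ _) 0)
  · exact (cx'.comp cp).aestronglyMeasurable
  · exact (continuous_const.mul (cx.comp cp)).aestronglyMeasurable
  · obtain ⟨C, hC⟩ := isCompact_Icc.exists_bound_of_continuousOn (cx'.continuousOn (s := Icc 0 1))
    obtain ⟨D, hD⟩ := isCompact_Icc.exists_bound_of_continuousOn
      ((by fun_prop : Continuous fun t => k * x t).continuousOn (s := Icc (0 : ℝ) 1))
    exact ⟨max C D, fun t => ⟨(hC _ (hp t)).trans (le_max_left _ _),
      (hD _ (hp t)).trans (le_max_right _ _)⟩⟩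
  · intro t ht
    rw [key x' t ht, intervalIntegral.integral_eq_sub_of_hasDerivAt (f := x) ?_
      (cx'.intervalIntegrable _ _)]
    · ring
    · intro s _
      have h1 : HasDerivAt x ((b₁ - a₁) * 1 + c * (1 * (1 - s) + s * (0 - 1))) s :=
        ((((hasDerivAt_id s).const_mul (b₁ - a₁)).const_add a₁)).add
          (((hasDerivAt_id s).mul ((hasDerivAt_const s 1).sub (hasDerivAt_id s))).const_mul c)
      have h2 : x' s = (b₁ - a₁) * 1 + c * (1 * (1 - s) + s * (0 - 1)) := by
        simp only [x']; ring
      exact h2 ▸ h1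
  · intro t ht
    simp only [intervalIntegral.integral_same, add_zero]
    congr 1
    refine intervalIntegral.integral_congr fun s hs => ?_
    rw [hpt s (uIcc_subset_Icc (by simp) ht hs)]
  · simp [hxdef]
  · have : ∫ s in (0 : ℝ)..1, x s * (k * x s) = k * I := by
      rw [← intervalIntegral.integral_const_mul]
      refine intervalIntegral.integral_congr fun s _ => ?_
      ring
    simp only [this, Prod.mk.injEq]
    constructor
    · simp [hxdef]
    · simp only [k]; field_simp; ring

/-- An admissible pair can be extended to a controlled curve on the line without changing its
endpoints or its length: the curve is extended by constants, the control by zero. -/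
lemma IsAdmissiblePair.exists_controlled {γ u : ℝ → ℝ × ℝ} (h : IsAdmissiblePair γ u) :
    ∃ x y v w, IsControlled x y v w ∧ (x 0, y 0) = γ 0 ∧ (x 1, y 1) = γ 1 ∧
      ∫ t in (0 : ℝ)..1, √(v t ^ 2 + w t ^ 2) =
        ∫ t in (0 : ℝ)..1, √((u t).1 ^ 2 + (u t).2 ^ 2) := by
  obtain ⟨⟨K, hK⟩, hm, ⟨C, hC⟩, hint⟩ := h
  set g : ℝ → ℝ × ℝ := IccExtend (zero_le_one (α := ℝ)) ((Icc (0 : ℝ) 1).domRestrict γ) with hg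
  have cg : Continuous g := (continuousOn_iff_continuous_domRestrict.1 hK.continuousOn).Icc_extend'
  have hgt : ∀ t ∈ Icc (0 : ℝ) 1, g t = γ t := fun t ht => by
    rw [hg, IccExtend_of_mem _ _ ht]; rfl
  set U : ℝ → ℝ × ℝ := (Icc (0 : ℝ) 1).indicator u with hU
  have mU : AEStronglyMeasurable U volume :=
    (aestronglyMeasurable_indicator_iff measurableSet_Icc).2 hm
  have hUt : ∀ t ∈ Icc (0 : ℝ) 1, U t = u t := fun t ht => indicator_of_mem ht u
  have hC0 : 0 ≤ C := (norm_nonneg _).trans (hC 0 (by simp))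
  have bU : ∀ t, ‖U t‖ ≤ C := fun t => by
    by_cases ht : t ∈ Icc (0 : ℝ) 1
    · rw [hUt t ht]; exact hC t ht
    · rw [hU, indicator_of_notMem ht]; simpa using hC0
  have m1 : AEStronglyMeasurable (fun t => (U t).1) volume := mU.fst
  have m2 : AEStronglyMeasurable (fun t => (U t).2) volume := mU.snd
  have b1 : ∀ t, |(U t).1| ≤ C := fun t => (norm_fst_le (U t)).trans (bU t)
  have b2 : ∀ t, |(U t).2| ≤ C := fun t => (norm_snd_le (U t)).trans (bU t)
  have i1 := intervalIntegrable_of_bdd m1 b1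
  have i2 : ∀ a b, IntervalIntegrable (fun s => (g s).1 * (U s).2) volume a b := fun a b =>
    (intervalIntegrable_of_bdd m2 b2 a b).continuousOn_mul cg.fst.continuousOn
  have key : ∀ t ∈ Icc (0 : ℝ) 1, g t = g 0 +
      (∫ s in (0 : ℝ)..t, (U s).1, ∫ s in (0 : ℝ)..t, (g s).1 * (U s).2) := by
    intro t ht
    rw [← intervalIntegral_prod (i1 0 t) (i2 0 t), hgt t ht, hgt 0 (by simp), hint t ht]
    congr 1
    refine intervalIntegral.integral_congr fun s hs => ?_
    have hs' := uIcc_subset_Icc (by simp) ht hs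
    rw [hUt s hs', hgt s hs']
  refine ⟨fun t => (g t).1, fun t => (g t).2, fun t => (U t).1, fun t => (U t).2,
    ⟨cg.fst, cg.snd, m1, m2, ⟨C, fun t => ⟨b1 t, b2 t⟩⟩, ?_, ?_⟩, ?_, ?_, ?_⟩
  · intro t ht
    exact congrArg Prod.fst (key t ht)
  · intro t ht
    exact congrArg Prod.snd (key t ht)
  · exact hgt 0 (by simp)
  · exact hgt 1 (by simp)
  · refine intervalIntegral.integral_congr fun s hs => ?_
    rw [uIcc_of_le zero_le_one] at hs
    simp only
    rw [hUt s hs]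

lemma exists_controlled_lt (a b : ℝ × ℝ) {ε : ℝ} (hε : 0 < ε) :
    ∃ x y v w, IsControlled x y v w ∧ (x 0, y 0) = a ∧ (x 1, y 1) = b ∧
      ∫ t in (0 : ℝ)..1, √(v t ^ 2 + w t ^ 2) < grushinDist a b + ε := by
  obtain ⟨x, y, v, w, h, h0, h1⟩ := exists_controlled a b
  have hne : {L | ∃ γ, IsAdmissible γ ∧ γ 0 = a ∧ γ 1 = b ∧ L = curveLength γ}.Nonempty :=
    ⟨_, fun t => (x t, y t), ⟨_, h.isAdmissiblePair⟩, h0, h1, rfl⟩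
  obtain ⟨_, ⟨γ, ⟨u, hu⟩, g0, g1, rfl⟩, hlt⟩ :=
    exists_lt_of_csInf_lt hne (show grushinDist a b < grushinDist a b + ε by linarith)
  have hne' : {L | ∃ u, IsAdmissiblePair γ u ∧
    L = ∫ t in (0 : ℝ)..1, Real.sqrt ((u t).1 ^ 2 + (u t).2 ^ 2)}.Nonempty := ⟨_, u, hu, rfl⟩
  obtain ⟨_, ⟨u', hu', rfl⟩, hlt'⟩ := exists_lt_of_csInf_lt hne' hlt
  obtain ⟨x, y, v, w, h, h0, h1, hl⟩ := hu'.exists_controlled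
  exact ⟨x, y, v, w, h, h0.trans g0, h1.trans g1, by rw [hl]; exact hlt'⟩

/-! ### Concatenation and the triangle inequality -/

/-- Running the first curve forwards and the second one backwards, each at double speed. -/
lemma IsControlled.dist_le_add {x y v w x' y' v' w' : ℝ → ℝ} (h : IsControlled x y v w)
    (h' : IsControlled x' y' v' w') (ex : x 1 = x' 1) (ey : y 1 = y' 1) :
    grushinDist (x 0, y 0) (x' 0, y' 0) ≤ (∫ t in (0 : ℝ)..1, √(v t ^ 2 + w t ^ 2)) +
      ∫ t in (0 : ℝ)..1, √(v' t ^ 2 + w' t ^ 2) := by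
  let X : ℝ → ℝ := fun t => if t ≤ 1 / 2 then x (2 * t) else x' (2 - 2 * t)
  let Y : ℝ → ℝ := fun t => if t ≤ 1 / 2 then y (2 * t) else y' (2 - 2 * t)
  let V : ℝ → ℝ := fun t => if t ≤ 1 / 2 then 2 * v (2 * t) else -2 * v' (2 - 2 * t)
  let W : ℝ → ℝ := fun t => if t ≤ 1 / 2 then 2 * w (2 * t) else -2 * w' (2 - 2 * t)
  have q1 : Measure.QuasiMeasurePreserving (fun t : ℝ => 2 * t) volume volume :=
    ⟨by fun_prop, by
      rw [Real.map_volume_mul_left two_ne_zero]; exact Measure.smul_absolutelyContinuous⟩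
  have q2 : Measure.QuasiMeasurePreserving (fun t : ℝ => 2 - 2 * t) volume volume :=
    (Measure.measurePreserving_sub_left volume (2 : ℝ)).quasiMeasurePreserving.comp q1
  have meas : ∀ {f f' : ℝ → ℝ}, AEStronglyMeasurable f volume → AEStronglyMeasurable f' volume →
      AEStronglyMeasurable (fun t : ℝ => if t ≤ 1 / 2 then 2 * f (2 * t)
        else -2 * f' (2 - 2 * t)) volume := by
    intro f f' hf hf'
    exact AEStronglyMeasurable.piecewise (s := Iic (1 / 2 : ℝ)) measurableSet_Iic
      ((hf.comp_quasiMeasurePreserving q1).const_mul 2).restrict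
      ((hf'.comp_quasiMeasurePreserving q2).const_mul (-2)).restrict
  -- Concatenating primitives; applied to both coordinates.
  have glue : ∀ {F f G g H : ℝ → ℝ}, (∀ t ∈ Icc (0 : ℝ) 1, F t = F 0 + ∫ s in (0 : ℝ)..t, f s) →
      (∀ t ∈ Icc (0 : ℝ) 1, G t = G 0 + ∫ s in (0 : ℝ)..t, g s) →
      (∀ a b, IntervalIntegrable f volume a b) →
      (∀ a b, IntervalIntegrable g volume a b) → F 1 = G 1 →
      (∀ t, H t = if t ≤ 1 / 2 then 2 * f (2 * t) else -2 * g (2 - 2 * t)) →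
      (∀ a b, IntervalIntegrable H volume a b) →
      ∀ t ∈ Icc (0 : ℝ) 1, (if t ≤ 1 / 2 then F (2 * t) else G (2 - 2 * t)) =
        F 0 + ∫ s in (0 : ℝ)..t, H s := by
    intro F f G g H hF hG iF iG e hH iH t ht
    have half : ∀ t ∈ Icc (0 : ℝ) (1 / 2), F (2 * t) = F 0 + ∫ s in (0 : ℝ)..t, H s := by
      intro t ht
      have : ∫ s in (0 : ℝ)..t, H s = ∫ s in (0 : ℝ)..t, 2 * f (2 * s) := by
        refine intervalIntegral.integral_congr fun s hs => ?_
        rw [uIcc_of_le ht.1] at hs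
        rw [hH, if_pos (hs.2.trans ht.2)]
      rw [this, intervalIntegral.integral_const_mul,
        intervalIntegral.mul_integral_comp_mul_left, mul_zero]
      exact hF _ ⟨by linarith [ht.1], by linarith [ht.2]⟩
    split_ifs with h2
    · exact half t ⟨ht.1, h2⟩
    · push Not at h2
      have e1 := half (1 / 2) (by norm_num)
      have : ∫ s in (1 / 2 : ℝ)..t, H s = ∫ s in (1 / 2 : ℝ)..t, -2 * g (2 - 2 * s) := by
        refine intervalIntegral.integral_congr_ae (ae_of_all _ fun s hs => ?_)
        rw [uIoc_of_le h2.le] at hs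
        rw [hH, if_neg (not_le.2 hs.1)]
      have e2 : ∫ s in (1 / 2 : ℝ)..t, -2 * g (2 - 2 * s) = G (2 - 2 * t) - G 1 := by
        rw [intervalIntegral.integral_const_mul, intervalIntegral.integral_comp_sub_mul _ two_ne_zero,
          hG (2 - 2 * t) ⟨by linarith [ht.2], by linarith⟩, hG 1 (by simp),
          add_sub_add_left_eq_sub, intervalIntegral.integral_interval_sub_left (iG _ _) (iG _ _),
          intervalIntegral.integral_symm, smul_eq_mul]
        norm_num
        ring
      rw [← intervalIntegral.integral_add_adjacent_intervals (iH 0 (1 / 2)) (iH (1 / 2) t),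
        ← add_assoc, ← e1, this, e2]
      norm_num [e]
  have cX : Continuous X := Continuous.if_le (h.cx.comp (by fun_prop)) (h'.cx.comp (by fun_prop))
    continuous_id continuous_const (fun t ht => by subst ht; norm_num [ex])
  have cY : Continuous Y := Continuous.if_le (h.cy.comp (by fun_prop)) (h'.cy.comp (by fun_prop))
    continuous_id continuous_const (fun t ht => by subst ht; norm_num [ey])
  obtain ⟨C, hC⟩ := h.bd
  obtain ⟨D, hD⟩ := h'.bd
  have bV : ∀ t, |V t| ≤ 2 * max C D := by
    intro t
    simp only [V]
    split_ifs <;> rw [abs_mul] <;> norm_num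
    · exact Or.inl (hC _).1
    · exact Or.inr (hD _).1
  have bW : ∀ t, |W t| ≤ 2 * max C D := by
    intro t
    simp only [W]
    split_ifs <;> rw [abs_mul] <;> norm_num
    · exact Or.inl (hC _).2
    · exact Or.inr (hD _).2
  have mV : AEStronglyMeasurable V volume := meas h.mv h'.mv
  have mW : AEStronglyMeasurable W volume := meas h.mw h'.mw
  have hZ : IsControlled X Y V W := by
    refine ⟨cX, cY, mV, mW, ⟨_, fun t => ⟨bV t, bW t⟩⟩, ?_, ?_⟩
    · have := glue h.hx h'.hx h.integrable_v h'.integrable_v ex (H := V) (fun t => rfl)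
        (intervalIntegrable_of_bdd mV bV)
      intro t ht
      have h0 : X 0 = x 0 := by norm_num [X]
      rw [h0]; exact this t ht
    · have := glue h.hy h'.hy h.integrable_xw h'.integrable_xw ey (H := fun s => X s * W s)
        (fun t => by simp only [X, W]; split_ifs <;> ring)
        (fun a b => (intervalIntegrable_of_bdd mW bW a b).continuousOn_mul cX.continuousOn)
      intro t ht
      have h0 : Y 0 = y 0 := by norm_num [Y]
      rw [h0]; exact this t ht
  have hle := hZ.dist_le
  have e0 : (X 0, Y 0) = (x 0, y 0) := by norm_num [X, Y]
  have e1 : (X 1, Y 1) = (x' 0, y' 0) := by norm_num [X, Y]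
  rw [e0, e1, ← intervalIntegral.integral_add_adjacent_intervals (hZ.integrable_speed 0 (1 / 2))
    (hZ.integrable_speed (1 / 2) 1)] at hle
  have sc : ∀ a b c : ℝ, c ^ 2 = 4 → √((c * a) ^ 2 + (c * b) ^ 2) = 2 * √(a ^ 2 + b ^ 2) := by
    intro a b c hc
    rw [show (c * a) ^ 2 + (c * b) ^ 2 = 2 ^ 2 * (a ^ 2 + b ^ 2) by rw [mul_pow, mul_pow, hc]; ring,
      Real.sqrt_mul (by norm_num), Real.sqrt_sq (by norm_num)]
  have l1 : ∫ s in (0 : ℝ)..(1 / 2), √(V s ^ 2 + W s ^ 2) = ∫ t in (0 : ℝ)..1, √(v t ^ 2 + w t ^ 2) := by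
    have : ∫ s in (0 : ℝ)..(1 / 2), √(V s ^ 2 + W s ^ 2) =
        ∫ s in (0 : ℝ)..(1 / 2), 2 * √(v (2 * s) ^ 2 + w (2 * s) ^ 2) := by
      refine intervalIntegral.integral_congr fun s hs => ?_
      rw [uIcc_of_le (by norm_num)] at hs
      simp only [V, W]
      rw [if_pos hs.2, if_pos hs.2, sc _ _ _ (by norm_num)]
    rw [this, intervalIntegral.integral_const_mul, intervalIntegral.mul_integral_comp_mul_left
      (f := fun s => √(v s ^ 2 + w s ^ 2))]
    norm_num
  have l2 : ∫ s in (1 / 2 : ℝ)..1, √(V s ^ 2 + W s ^ 2) =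
      ∫ t in (0 : ℝ)..1, √(v' t ^ 2 + w' t ^ 2) := by
    have : ∫ s in (1 / 2 : ℝ)..1, √(V s ^ 2 + W s ^ 2) =
        ∫ s in (1 / 2 : ℝ)..1, 2 * √(v' (2 - 2 * s) ^ 2 + w' (2 - 2 * s) ^ 2) := by
      refine intervalIntegral.integral_congr_ae (ae_of_all _ fun s hs => ?_)
      rw [uIoc_of_le (by norm_num)] at hs
      simp only [V, W]
      rw [if_neg (not_le.2 hs.1), if_neg (not_le.2 hs.1), sc _ _ _ (by norm_num)]
    rw [this, intervalIntegral.integral_const_mul, intervalIntegral.integral_comp_sub_mul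
      (fun s => √(v' s ^ 2 + w' s ^ 2)) two_ne_zero]
    norm_num
    ring
  rwa [l1, l2] at hle

/-- The triangle inequality, in a form that also contains the symmetry of the distance. -/
lemma grushinDist_triangle (a b c : ℝ × ℝ) :
    grushinDist a b ≤ grushinDist a c + grushinDist b c := by
  refine le_of_forall_pos_le_add fun ε hε => ?_
  obtain ⟨x, y, v, w, h, h0, h1, hl⟩ := exists_controlled_lt a c (half_pos hε)
  obtain ⟨x', y', v', w', h', h0', h1', hl'⟩ := exists_controlled_lt b c (half_pos hε)
  have e := h1.trans h1'.symm
  have := h.dist_le_add h' (congrArg Prod.fst e) (congrArg Prod.snd e)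
  rw [h0, h0'] at this
  linarith

/-! ### Saving length by freezing the height -/

/-- Deleting the vertical part `β` of the control vector `(α, β)` saves at least
`2k|β| - 2k²‖(α, β)‖`, a bound linear in `|β|` and the speed and hence suited to integration. -/
lemma abs_le_speed_sub (α β k : ℝ) :
    |α| ≤ √(α ^ 2 + β ^ 2) - 2 * k * |β| + 2 * k ^ 2 * √(α ^ 2 + β ^ 2) := by
  set f := √(α ^ 2 + β ^ 2)
  have hf : 0 ≤ f := Real.sqrt_nonneg _
  have hf2 : f ^ 2 = |α| ^ 2 + |β| ^ 2 := by
    rw [sq_abs, sq_abs]; exact Real.sq_sqrt (by positivity)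
  have hα : 0 ≤ |α| := abs_nonneg α
  have hαf : |α| ≤ f := by nlinarith [sq_nonneg |β|]
  rcases hf.eq_or_lt with h0 | h0
  · have h1 : |α| = 0 := le_antisymm (by linarith) hα
    have h2 : |β| = 0 := by
      rw [← h0, h1] at hf2
      exact pow_eq_zero_iff two_ne_zero |>.1 (by linarith)
    rw [h1, h2, ← h0]; simp
  · by_contra! hc
    have : 2 * f * (f - |α|) < 2 * f * (2 * k * |β| - 2 * k ^ 2 * f) :=
      mul_lt_mul_of_pos_left (by linarith) (by linarith)
    nlinarith [sq_nonneg (|β| - 2 * k * f), mul_nonneg (sub_nonneg.2 hαf) (sub_nonneg.2 hαf)]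

/-- Freezing the height of a curve from the time `τ` on: the new curve ends at `(x 1, y τ)`, and
the length saved is controlled by the height `|y 1 - y τ|` that is no longer climbed. -/
lemma IsControlled.dist_freeze_le {x y v w : ℝ → ℝ} (h : IsControlled x y v w) {τ : ℝ}
    (hτ : τ ∈ Icc (0 : ℝ) 1) {L : ℝ} (hL : ∫ t in (0 : ℝ)..1, √(v t ^ 2 + w t ^ 2) ≤ L)
    {R k : ℝ} (hR : 0 < R) (hRL : |x 0| + L ≤ R) (hk : 0 ≤ k) :
    grushinDist (x 0, y 0) (x 1, y τ) ≤ (∫ t in (0 : ℝ)..1, √(v t ^ 2 + w t ^ 2)) -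
      2 * k * (|y 1 - y τ| / R) + 2 * k ^ 2 * L := by
  let W : ℝ → ℝ := (Iic τ).indicator w
  have hWt : ∀ t ≤ τ, W t = w t := fun t ht => indicator_of_mem (s := Iic τ) ht w
  have hWt' : ∀ t, τ < t → W t = 0 := fun t ht => indicator_of_notMem (s := Iic τ) (not_le.2 ht) w
  have hZ : IsControlled x (fun t => y (min t τ)) v W := by
    obtain ⟨C, hC⟩ := h.bd
    have hC0 : 0 ≤ C := (abs_nonneg _).trans (hC 0).1
    have mW : AEStronglyMeasurable W volume := h.mw.indicator measurableSet_Iic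
    have bW : ∀ t, |W t| ≤ C := fun t => by
      by_cases ht : t ≤ τ
      · rw [hWt t ht]; exact (hC t).2
      · rw [hWt' t (not_le.1 ht)]; simpa using hC0
    refine ⟨h.cx, h.cy.comp (by fun_prop), h.mv, mW, ⟨C, fun t => ⟨(hC t).1, bW t⟩⟩, h.hx, ?_⟩
    have iW : ∀ a b, IntervalIntegrable (fun s => x s * W s) volume a b := fun a b =>
      (intervalIntegrable_of_bdd mW bW a b).continuousOn_mul h.cx.continuousOn
    have low : ∀ t, 0 ≤ t → t ≤ τ →
        ∫ s in (0 : ℝ)..t, x s * W s = ∫ s in (0 : ℝ)..t, x s * w s := by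
      intro t h0 ht
      refine intervalIntegral.integral_congr fun s hs => ?_
      rw [uIcc_of_le h0] at hs
      rw [hWt s (hs.2.trans ht)]
    intro t ht
    simp only [min_eq_left hτ.1]
    rcases le_total t τ with htτ | htτ
    · rw [min_eq_left htτ, low t ht.1 htτ, h.hy t ht]
    · rw [min_eq_right htτ, ← intervalIntegral.integral_add_adjacent_intervals (iW 0 τ) (iW τ t),
        low τ hτ.1 le_rfl, h.hy τ hτ]
      have : ∫ s in τ..t, x s * W s = 0 := by
        refine intervalIntegral.integral_zero_ae (ae_of_all _ fun s hs => ?_)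
        rw [uIoc_of_le htτ] at hs
        rw [hWt' s hs.1, mul_zero]
      rw [this, add_zero]
  have hle := hZ.dist_le
  simp only [min_eq_left hτ.1, min_eq_right hτ.2] at hle
  refine hle.trans ?_
  have hx : ∀ t ∈ Icc (0 : ℝ) 1, |x t| ≤ R := by
    intro t ht
    have : |∫ s in (0 : ℝ)..t, v s| ≤ L := by
      calc |∫ s in (0 : ℝ)..t, v s| ≤ ∫ s in (0 : ℝ)..t, |v s| :=
            intervalIntegral.abs_integral_le_integral_abs ht.1
        _ ≤ ∫ s in (0 : ℝ)..t, √(v s ^ 2 + w s ^ 2) :=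
            intervalIntegral.integral_mono_on ht.1 (h.integrable_v _ _).abs (h.integrable_speed _ _)
              fun s _ => Real.abs_le_sqrt (by nlinarith [sq_nonneg (w s)])
        _ ≤ ∫ s in (0 : ℝ)..1, √(v s ^ 2 + w s ^ 2) :=
            intervalIntegral.integral_mono_interval le_rfl ht.1 ht.2
              (ae_of_all _ fun s => Real.sqrt_nonneg _) (h.integrable_speed _ _)
        _ ≤ L := hL
    rw [h.hx t ht]
    exact (abs_add_le _ _).trans (by linarith)
  have hy : |y 1 - y τ| / R ≤ ∫ s in τ..1, |w s| := by
    have e : y 1 - y τ = ∫ s in τ..1, x s * w s := by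
      rw [h.hy 1 (by simp), h.hy τ hτ, add_sub_add_left_eq_sub,
        intervalIntegral.integral_interval_sub_left (h.integrable_xw _ _) (h.integrable_xw _ _)]
    rw [div_le_iff₀' hR, e, ← intervalIntegral.integral_const_mul]
    refine (intervalIntegral.abs_integral_le_integral_abs hτ.2).trans ?_
    refine intervalIntegral.integral_mono_on hτ.2 (h.integrable_xw _ _).abs
      ((h.integrable_w _ _).abs.const_mul R) fun s hs => ?_
    rw [abs_mul]
    exact mul_le_mul_of_nonneg_right (hx s ⟨hτ.1.trans hs.1, hs.2⟩) (abs_nonneg _)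
  have hf : ∫ s in τ..1, √(v s ^ 2 + w s ^ 2) ≤ L :=
    (intervalIntegral.integral_mono_interval hτ.1 hτ.2 le_rfl
      (ae_of_all _ fun s => Real.sqrt_nonneg _) (h.integrable_speed _ _)).trans hL
  have l1 : ∫ s in (0 : ℝ)..τ, √(v s ^ 2 + W s ^ 2) = ∫ s in (0 : ℝ)..τ, √(v s ^ 2 + w s ^ 2) := by
    refine intervalIntegral.integral_congr fun s hs => ?_
    rw [uIcc_of_le hτ.1] at hs
    rw [hWt s hs.2]
  have l2 : ∫ s in τ..1, √(v s ^ 2 + W s ^ 2) = ∫ s in τ..1, |v s| := by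
    refine intervalIntegral.integral_congr_ae (ae_of_all _ fun s hs => ?_)
    rw [uIoc_of_le hτ.2] at hs
    rw [hWt' s hs.1, zero_pow two_ne_zero, add_zero, Real.sqrt_sq_eq_abs]
  have l3 : ∫ s in τ..1, |v s| ≤ (∫ s in τ..1, √(v s ^ 2 + w s ^ 2)) -
      2 * k * (∫ s in τ..1, |w s|) + 2 * k ^ 2 * ∫ s in τ..1, √(v s ^ 2 + w s ^ 2) := by
    have i1 := h.integrable_speed τ 1
    have i2 := (h.integrable_w τ 1).abs.const_mul (2 * k)
    have i3 := i1.const_mul (2 * k ^ 2)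
    rw [← intervalIntegral.integral_const_mul, ← intervalIntegral.integral_const_mul,
      ← intervalIntegral.integral_sub i1 i2, ← intervalIntegral.integral_add (i1.sub i2) i3]
    exact intervalIntegral.integral_mono_on hτ.2 (h.integrable_v _ _).abs ((i1.sub i2).add i3)
      fun s _ => abs_le_speed_sub _ _ _
  rw [← intervalIntegral.integral_add_adjacent_intervals (hZ.integrable_speed 0 τ)
    (hZ.integrable_speed τ 1), l1, l2,
    ← intervalIntegral.integral_add_adjacent_intervals (h.integrable_speed 0 τ)
    (h.integrable_speed τ 1)]
  have k1 := mul_le_mul_of_nonneg_left hy (by positivity : 0 ≤ 2 * k)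
  have k2 := mul_le_mul_of_nonneg_left hf (by positivity : 0 ≤ 2 * k ^ 2)
  linarith

/-- Moving the endpoint vertically towards the height of the starting point strictly decreases the
distance: almost optimal curves cross the height `M`, and the length saved by freezing them there
is bounded below uniformly. -/
lemma grushinDist_lt_of_mem_uIcc (a p : ℝ × ℝ) {M : ℝ} (hM : M ∈ uIcc a.2 p.2) (hne : M ≠ p.2) :
    grushinDist a (p.1, M) < grushinDist a p := by
  have hd := grushinDist_nonneg a p
  set L := grushinDist a p + 1 with hLdef
  have hL : 0 < L := by linarith
  set R := |a.1| + L with hRdef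
  have hR : 0 < R := by positivity
  have hh : 0 < |p.2 - M| := abs_pos.2 (sub_ne_zero.2 hne.symm)
  set q := |p.2 - M| / R with hq
  have hq0 : 0 < q := div_pos hh hR
  -- This `k` maximises the saving `2 k q - 2 k² L`.
  set k := q / (2 * L) with hkdef
  have hk : 0 < k := by positivity
  have hkL : 2 * k ^ 2 * L = k * q := by rw [hkdef]; field_simp
  obtain ⟨x, y, v, w, h, h0, h1, hl⟩ := exists_controlled_lt a p
    (lt_min zero_lt_one (mul_pos hk hq0))
  have h0x : x 0 = a.1 := congrArg Prod.fst h0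
  have h0y : y 0 = a.2 := congrArg Prod.snd h0
  have h1x : x 1 = p.1 := congrArg Prod.fst h1
  have h1y : y 1 = p.2 := congrArg Prod.snd h1
  rw [← h1y, ← h0y] at hM
  obtain ⟨τ, hτ, hyτ⟩ := intermediate_value_uIcc h.cy.continuousOn hM
  rw [uIcc_of_le zero_le_one] at hτ
  have m1 := min_le_left 1 (k * q)
  have m2 := min_le_right 1 (k * q)
  have := h.dist_freeze_le hτ (L := L) (by linarith) hR (by rw [h0x]) hk.le
  rw [h0, h1x, hyτ, h1y, ← hq, hkL] at this
  linarith

/-! ### Geodesics stay in the strip -/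

theorem stmt_13 (γ : ℝ → ℝ × ℝ) (hγ : IsGeodesic γ) :
    ∀ t ∈ Icc (0 : ℝ) 1,
      min ((γ 0).2) ((γ 1).2) ≤ (γ t).2 ∧ (γ t).2 ≤ max ((γ 0).2) ((γ 1).2) := by
  intro t ht
  have h0 := hγ 0 (by simp) t ht
  have h1 := hγ 1 (by simp) t ht
  rw [zero_sub, abs_neg, abs_of_nonneg ht.1] at h0
  rw [abs_of_nonneg (sub_nonneg.2 ht.2)] at h1
  -- No height `M ≠ γ₂(t)` separates `γ(t)` from both endpoints.
  have key : ∀ M, M ∈ uIcc (γ 0).2 (γ t).2 → M ∈ uIcc (γ 1).2 (γ t).2 → M = (γ t).2 := by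
    intro M hM0 hM1
    by_contra hne
    have l0 := grushinDist_lt_of_mem_uIcc _ _ hM0 hne
    have l1 := grushinDist_lt_of_mem_uIcc _ _ hM1 hne
    have := grushinDist_triangle (γ 0) (γ 1) ((γ t).1, M)
    linarith
  constructor
  · by_contra! hlt
    refine hlt.ne' (key _ ?_ ?_)
    · rw [mem_uIcc]; exact Or.inr ⟨hlt.le, min_le_left _ _⟩
    · rw [mem_uIcc]; exact Or.inr ⟨hlt.le, min_le_right _ _⟩
  · by_contra! hlt
    refine hlt.ne (key _ ?_ ?_)
    · rw [mem_uIcc]; exact Or.inl ⟨le_max_left _ _, hlt.le⟩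
    · rw [mem_uIcc]; exact Or.inl ⟨le_max_right _ _, hlt.le⟩
end

section
/- There exist constants C > 0 and ℓ₀ ≥ 1 such that for every ℓ ≥ ℓ₀ the following holds: if q₀ ∈ [−ℓ−1, −ℓ] × [0,1], q₁ ∈ [ℓ, ℓ+1] × [0,1], and q = (x,y) ∈ ℝ² is a metric midpoint of q₀ and q₁, i.e. d(q, q₀) = d(q, q₁) = (1/2)·d(q₀, q₁), then |x| ≤ 1 + C/ℓ and 0 ≤ y ≤ 1. -/
/-!
The bound on `q.1` follows from comparing two estimates. The Grushin distance is at least the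
difference of the first coordinates (`abs_fst_sub_le_length`). Moving vertically along a line
`x = x₀` with `|x₀| ≥ ℓ` and then horizontally shows `d(q₀, q₁) ≤ x₁ - x₀ + 1/ℓ`
(`grushinDist_le_elbow`). Hence a midpoint has first coordinate within `1/(2ℓ)` of the mean of the
first coordinates of the endpoints.

For the second coordinate, suppose `q.2 > 1` (the case `q.2 < 0` is the same). Contracting the
second coordinate of a curve from `q` to `qᵢ` towards the height of `qᵢ` gives a curve from
`(q.1, 1)` to `qᵢ`, and it multiplies the control `u₂` by some `r ∈ [0, 1)`. The length drops by an
amount bounded below uniformly over near-minimizers: by Cauchy-Schwarz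
`∫ u₂² / |u| ≥ (∫ |u₂|)² / ∫ |u|`, and `∫ |u₂|` is bounded below by the height difference divided
by a bound for `|γ₁|`. So `(q.1, 1)` is joined to `qᵢ` by a curve shorter than `d(q, qᵢ)`
(`exists_shorter`); no existence of geodesics is needed. Gluing the two curves at `(q.1, 1)`
(`joined_cat`) contradicts `d(q, q₀) + d(q, q₁) = d(q₀, q₁)`.
-/


open MeasureTheory Set

/-! ### Controls and integrability -/

/-- The sub-Riemannian speed of a control. -/
noncomputable def speed (u : ℝ → ℝ × ℝ) (t : ℝ) : ℝ := Real.sqrt ((u t).1 ^ 2 + (u t).2 ^ 2)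

/-- The velocity of the curve `γ` prescribed by the control `u`. -/
def velocity (γ u : ℝ → ℝ × ℝ) (s : ℝ) : ℝ × ℝ := ((u s).1, (γ s).1 * (u s).2)

lemma intervalIntegrable_of_bounded {E : Type*} [NormedAddCommGroup E]
    {f : ℝ → E} (hf : AEStronglyMeasurable f (volume.restrict (Icc (0 : ℝ) 1))) {C : ℝ}
    (hC : ∀ t ∈ Icc (0 : ℝ) 1, ‖f t‖ ≤ C) : IntervalIntegrable f volume 0 1 := by
  rw [intervalIntegrable_iff_integrableOn_Icc_of_le zero_le_one]
  refine IntegrableOn.of_bound (by simp) hf C ?_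
  exact (ae_restrict_iff' measurableSet_Icc).2 (Filter.Eventually.of_forall hC)

lemma intervalIntegrable_velocity {γ u : ℝ → ℝ × ℝ} (hu : IntervalIntegrable u volume 0 1)
    (hγ : ContinuousOn γ (Icc 0 1)) : IntervalIntegrable (velocity γ u) volume 0 1 := by
  have h0 : uIcc (0 : ℝ) 1 = Icc 0 1 := uIcc_of_le zero_le_one
  have h1 : IntervalIntegrable (fun s => (u s).1) volume 0 1 :=
    ⟨hu.1.fst, hu.2.fst⟩
  have h2 : IntervalIntegrable (fun s => (u s).2) volume 0 1 :=
    ⟨hu.1.snd, hu.2.snd⟩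
  have h3 : IntervalIntegrable (fun s => (γ s).1 * (u s).2) volume 0 1 :=
    h2.continuousOn_mul (by rw [h0]; exact hγ.fst)
  exact ⟨h1.1.prodMk h3.1, h1.2.prodMk h3.2⟩

lemma speed_nonneg (u : ℝ → ℝ × ℝ) (t : ℝ) : 0 ≤ speed u t := Real.sqrt_nonneg _

lemma abs_fst_le_speed (u : ℝ → ℝ × ℝ) (t : ℝ) : |(u t).1| ≤ speed u t :=
  Real.abs_le_sqrt (by nlinarith [sq_nonneg (u t).2])

lemma speed_le (u : ℝ → ℝ × ℝ) (t : ℝ) : speed u t ≤ 2 * ‖u t‖ := by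
  have h1 : |(u t).1| ≤ ‖u t‖ := norm_fst_le (u t)
  have h2 : |(u t).2| ≤ ‖u t‖ := norm_snd_le (u t)
  refine Real.sqrt_le_iff.2 ⟨by positivity, ?_⟩
  rw [← sq_abs (u t).1, ← sq_abs (u t).2]
  nlinarith [abs_nonneg (u t).1, abs_nonneg (u t).2]

/-- The Lipschitz condition in `IsAdmissiblePair` is automatic for a continuous curve. -/
lemma IsAdmissiblePair.of_continuousOn {γ u : ℝ → ℝ × ℝ} (hu : IntervalIntegrable u volume 0 1) {C : ℝ}
    (hC : ∀ t ∈ Icc (0 : ℝ) 1, ‖u t‖ ≤ C) (hγ : ContinuousOn γ (Icc 0 1))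
    (h : ∀ t ∈ Icc (0 : ℝ) 1, γ t = γ 0 + ∫ s in (0 : ℝ)..t, velocity γ u s) :
    IsAdmissiblePair γ u := by
  refine ⟨?_, ((intervalIntegrable_iff_integrableOn_Icc_of_le zero_le_one).1
    hu).aestronglyMeasurable, ⟨C, hC⟩, h⟩
  obtain ⟨B, hB⟩ := isCompact_Icc.exists_bound_of_continuousOn hγ
  have hv := intervalIntegrable_velocity hu hγ
  have hC0 : 0 ≤ C := (norm_nonneg _).trans (hC 0 (by simp))
  have hB0 : 0 ≤ B := (norm_nonneg _).trans (hB 0 (by simp))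
  have hsub : ∀ t ∈ Icc (0 : ℝ) 1, IntervalIntegrable (velocity γ u) volume 0 t := fun t ht =>
    hv.mono_set (by rw [uIcc_of_le ht.1, uIcc_of_le zero_le_one]; exact Icc_subset_Icc_right ht.2)
  refine ⟨⟨C + B * C, by positivity⟩, LipschitzOnWith.of_dist_le_mul ?_⟩
  intro s hs t ht
  rw [dist_comm, dist_comm s t, dist_eq_norm, dist_eq_norm, h t ht, h s hs, add_sub_add_left_eq_sub,
    intervalIntegral.integral_interval_sub_left (hsub t ht) (hsub s hs)]
  refine intervalIntegral.norm_integral_le_of_norm_le_const fun x hx => ?_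
  have hx' : x ∈ Icc (0 : ℝ) 1 := by
    have := uIoc_subset_uIcc hx
    exact uIcc_subset_Icc hs ht this
  have h1 : ‖(u x).1‖ ≤ C := (norm_fst_le _).trans (hC x hx')
  have h2 : ‖(u x).2‖ ≤ C := (norm_snd_le _).trans (hC x hx')
  have h3 : ‖(γ x).1‖ ≤ B := (norm_fst_le _).trans (hB x hx')
  have h4 : ‖(γ x).1 * (u x).2‖ ≤ B * C := by
    rw [norm_mul]; exact mul_le_mul h3 h2 (norm_nonneg _) hB0
  change ‖velocity γ u x‖ ≤ C + B * C
  exact norm_prod_le_iff.2 ⟨h1.trans (by nlinarith), h4.trans (by linarith)⟩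

lemma IsAdmissiblePair.intervalIntegrable {γ u : ℝ → ℝ × ℝ} (h : IsAdmissiblePair γ u) :
    IntervalIntegrable u volume 0 1 :=
  intervalIntegrable_of_bounded h.2.1 h.2.2.1.choose_spec

lemma IsAdmissiblePair.continuousOn {γ u : ℝ → ℝ × ℝ} (h : IsAdmissiblePair γ u) :
    ContinuousOn γ (Icc 0 1) := h.1.choose_spec.continuousOn

lemma IsAdmissiblePair.intervalIntegrable_speed {γ u : ℝ → ℝ × ℝ} (h : IsAdmissiblePair γ u) :
    IntervalIntegrable (speed u) volume 0 1 := by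
  obtain ⟨-, hm, ⟨C, hC⟩, -⟩ := h
  have hc : Continuous fun p : ℝ × ℝ => Real.sqrt (p.1 ^ 2 + p.2 ^ 2) := by fun_prop
  refine intervalIntegrable_of_bounded (C := 2 * C) (hc.comp_aestronglyMeasurable hm) ?_
  intro t ht
  change ‖speed u t‖ ≤ _
  rw [Real.norm_of_nonneg (speed_nonneg u t)]
  exact (speed_le u t).trans (by linarith [hC t ht])

lemma IsAdmissiblePair.integrable_velocity {γ u : ℝ → ℝ × ℝ} (h : IsAdmissiblePair γ u) {t : ℝ}
    (ht : t ∈ Icc (0 : ℝ) 1) : IntervalIntegrable (velocity γ u) volume 0 t :=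
  (intervalIntegrable_velocity h.intervalIntegrable h.continuousOn).mono_set
    (by rw [uIcc_of_le ht.1, uIcc_of_le zero_le_one]; exact Icc_subset_Icc_right ht.2)

lemma IsAdmissiblePair.fst_eq {γ u : ℝ → ℝ × ℝ} (h : IsAdmissiblePair γ u) {t : ℝ}
    (ht : t ∈ Icc (0 : ℝ) 1) : (γ t).1 = (γ 0).1 + ∫ s in (0 : ℝ)..t, (u s).1 := by
  have h1 := congrArg Prod.fst (h.2.2.2 t ht)
  have h2 := (ContinuousLinearMap.fst ℝ ℝ ℝ).intervalIntegral_comp_comm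
    (h.integrable_velocity ht)
  simp only [ContinuousLinearMap.coe_fst', velocity] at h2
  rw [h1, Prod.fst_add, h2]

lemma IsAdmissiblePair.snd_eq {γ u : ℝ → ℝ × ℝ} (h : IsAdmissiblePair γ u) {t : ℝ}
    (ht : t ∈ Icc (0 : ℝ) 1) :
    (γ t).2 = (γ 0).2 + ∫ s in (0 : ℝ)..t, (γ s).1 * (u s).2 := by
  have h1 := congrArg Prod.snd (h.2.2.2 t ht)
  have h2 := (ContinuousLinearMap.snd ℝ ℝ ℝ).intervalIntegral_comp_comm
    (h.integrable_velocity ht)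
  simp only [ContinuousLinearMap.coe_snd', velocity] at h2
  rw [h1, Prod.snd_add, h2]

/-! ### The distance as an infimum over pairs of a curve and a control -/

/-- Some curve with an explicit control of length `L` runs from `a` to `b`. -/
def JoinedBy (a b : ℝ × ℝ) (L : ℝ) : Prop :=
  ∃ γ u, IsAdmissiblePair γ u ∧ γ 0 = a ∧ γ 1 = b ∧ L = ∫ t in (0 : ℝ)..1, speed u t

lemma bddBelow_lengths (γ : ℝ → ℝ × ℝ) : BddBelow {L | ∃ u, IsAdmissiblePair γ u ∧
    L = ∫ t in (0 : ℝ)..1, Real.sqrt ((u t).1 ^ 2 + (u t).2 ^ 2)} := by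
  refine ⟨0, ?_⟩
  rintro L ⟨u, -, rfl⟩
  exact intervalIntegral.integral_nonneg zero_le_one fun t _ => Real.sqrt_nonneg _

lemma grushinDist_le {a b : ℝ × ℝ} {L : ℝ} (h : JoinedBy a b L) : grushinDist a b ≤ L := by
  obtain ⟨γ, u, hp, h0, h1, rfl⟩ := h
  have hb : BddBelow {L | ∃ γ, IsAdmissible γ ∧ γ 0 = a ∧ γ 1 = b ∧ L = curveLength γ} := by
    refine ⟨0, ?_⟩
    rintro L ⟨γ, -, -, -, rfl⟩
    exact curveLength_nonneg γ
  exact (csInf_le hb ⟨γ, ⟨u, hp⟩, h0, h1, rfl⟩).trans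
    (csInf_le (bddBelow_lengths γ) ⟨u, hp, rfl⟩)

/-- Near-minimizers exist as soon as `a` and `b` can be joined. Positivity of the distance is
enough for that, since the infimum of the empty set is `0`. -/
lemma exists_near {a b : ℝ × ℝ} (h : (∃ L, JoinedBy a b L) ∨ 0 < grushinDist a b) {ε : ℝ}
    (hε : 0 < ε) : ∃ L, JoinedBy a b L ∧ L < grushinDist a b + ε := by
  have hne : {L | ∃ γ, IsAdmissible γ ∧ γ 0 = a ∧ γ 1 = b ∧ L = curveLength γ}.Nonempty := by
    rcases h with ⟨L, γ, u, hp, h0, h1, -⟩ | h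
    · exact ⟨_, γ, ⟨u, hp⟩, h0, h1, rfl⟩
    · by_contra hne
      rw [not_nonempty_iff_eq_empty] at hne
      rw [grushinDist, hne, Real.sInf_empty] at h
      exact lt_irrefl _ h
  obtain ⟨L, ⟨γ, ⟨u₀, hu₀⟩, h0, h1, rfl⟩, hL⟩ :=
    exists_lt_of_csInf_lt hne (show sInf _ < grushinDist a b + ε by
      rw [← grushinDist]; linarith)
  obtain ⟨L', ⟨u, hu, rfl⟩, hL'⟩ := exists_lt_of_csInf_lt
    (s := {L | ∃ u, IsAdmissiblePair γ u ∧
      L = ∫ t in (0 : ℝ)..1, Real.sqrt ((u t).1 ^ 2 + (u t).2 ^ 2)}) ⟨_, u₀, hu₀, rfl⟩ hL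
  exact ⟨_, ⟨γ, u, hu, h0, h1, rfl⟩, hL'⟩

lemma IsAdmissiblePair.abs_fst_sub_le {γ u : ℝ → ℝ × ℝ} (h : IsAdmissiblePair γ u) {t : ℝ}
    (ht : t ∈ Icc (0 : ℝ) 1) : |(γ t).1 - (γ 0).1| ≤ ∫ s in (0 : ℝ)..1, speed u s := by
  rw [h.fst_eq ht, add_sub_cancel_left]
  have hs : ∀ t ∈ Icc (0 : ℝ) 1, IntervalIntegrable (speed u) volume 0 t := fun t ht =>
    h.intervalIntegrable_speed.mono_set
      (by rw [uIcc_of_le ht.1, uIcc_of_le zero_le_one]; exact Icc_subset_Icc_right ht.2)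
  have h1 : |∫ s in (0 : ℝ)..t, (u s).1| ≤ ∫ s in (0 : ℝ)..t, speed u s := by
    rw [← Real.norm_eq_abs]
    exact intervalIntegral.norm_integral_le_of_norm_le ht.1
      (Filter.Eventually.of_forall fun s _ => abs_fst_le_speed u s) (hs t ht)
  refine h1.trans ?_
  exact intervalIntegral.integral_mono_interval le_rfl ht.1 ht.2
    (Filter.Eventually.of_forall fun s => speed_nonneg u s) h.intervalIntegrable_speed

lemma abs_fst_sub_le_length {a b : ℝ × ℝ} {L : ℝ} (h : JoinedBy a b L) : |b.1 - a.1| ≤ L := by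
  obtain ⟨γ, u, hp, rfl, rfl, rfl⟩ := h
  exact hp.abs_fst_sub_le (by simp)

lemma abs_fst_sub_le_dist {a b : ℝ × ℝ} (h : (∃ L, JoinedBy a b L) ∨ 0 < grushinDist a b) :
    |b.1 - a.1| ≤ grushinDist a b := by
  refine le_of_forall_pos_lt_add fun ε hε => ?_
  obtain ⟨L, hL, hlt⟩ := exists_near h hε
  exact (abs_fst_sub_le_length hL).trans_lt hlt

/-! ### Gluing two curves with the same starting point -/

/-- Traverse `f` backwards on `[0, 1/2]` and then `g` forwards on `[1/2, 1]`, at double speed. -/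
noncomputable def cat {E : Type*} (f g : ℝ → E) (t : ℝ) : E :=
  if t ≤ 1 / 2 then f (1 - 2 * t) else g (2 * t - 1)

lemma cat_of_le {E : Type*} {f g : ℝ → E} {t : ℝ} (h : t ≤ 1 / 2) : cat f g t = f (1 - 2 * t) :=
  if_pos h

lemma cat_of_lt {E : Type*} {f g : ℝ → E} {t : ℝ} (h : 1 / 2 < t) : cat f g t = g (2 * t - 1) :=
  if_neg h.not_ge

section Cat

variable {E : Type*} [NormedAddCommGroup E] {f g : ℝ → E}

lemma intervalIntegrable_cat_left (hf : IntervalIntegrable f volume 0 1) :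
    IntervalIntegrable (cat f g) volume 0 (1 / 2) := by
  have h1 : IntervalIntegrable (fun t => f (1 - 2 * t)) volume 0 (1 / 2) := by
    have := ((hf.comp_sub_left 1).comp_mul_left (c := 2)).symm
    norm_num at this ⊢
    exact this
  refine h1.congr ?_
  intro t ht
  rw [uIoc_of_le (by norm_num)] at ht
  exact (cat_of_le ht.2).symm

lemma intervalIntegrable_cat_right (hg : IntervalIntegrable g volume 0 1) :
    IntervalIntegrable (cat f g) volume (1 / 2) 1 := by
  have h1 : IntervalIntegrable (fun t => g (2 * t - 1)) volume (1 / 2) 1 := by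
    have := ((hg.comp_sub_right 1).comp_mul_left (c := 2))
    norm_num at this ⊢
    exact this
  refine h1.congr ?_
  intro t ht
  rw [uIoc_of_le (by norm_num)] at ht
  exact (cat_of_lt ht.1).symm

lemma intervalIntegrable_cat (hf : IntervalIntegrable f volume 0 1)
    (hg : IntervalIntegrable g volume 0 1) : IntervalIntegrable (cat f g) volume 0 1 :=
  (intervalIntegrable_cat_left hf).trans (intervalIntegrable_cat_right hg)

lemma integral_cat_left [NormedSpace ℝ E] {t : ℝ} (h0 : 0 ≤ t) (ht : t ≤ 1 / 2) :
    ∫ s in (0 : ℝ)..t, cat f g s = (2 : ℝ)⁻¹ • ∫ s in (1 - 2 * t)..1, f s := by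
  have h1 : ∫ s in (0 : ℝ)..t, cat f g s = ∫ s in (0 : ℝ)..t, f (1 - 2 * s) := by
    refine intervalIntegral.integral_congr fun s hs => ?_
    rw [uIcc_of_le h0] at hs
    exact cat_of_le (hs.2.trans ht)
  rw [h1, intervalIntegral.integral_comp_sub_mul f two_ne_zero 1]
  simp

lemma integral_cat_right [NormedSpace ℝ E] (hf : IntervalIntegrable f volume 0 1)
    (hg : IntervalIntegrable g volume 0 1) {t : ℝ} (h0 : 1 / 2 ≤ t) (ht : t ≤ 1) :
    ∫ s in (0 : ℝ)..t, cat f g s =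
      (2 : ℝ)⁻¹ • (∫ s in (0 : ℝ)..1, f s) + (2 : ℝ)⁻¹ • ∫ s in (0 : ℝ)..(2 * t - 1), g s := by
  have h1 : ∫ s in (1 / 2 : ℝ)..t, cat f g s = ∫ s in (1 / 2 : ℝ)..t, g (2 * s - 1) := by
    refine intervalIntegral.integral_congr_ae (Filter.Eventually.of_forall fun s hs => ?_)
    rw [uIoc_of_le h0] at hs
    exact cat_of_lt hs.1
  have h2 : IntervalIntegrable (cat f g) volume (1 / 2) t :=
    (intervalIntegrable_cat_right hg).mono_set
      (by rw [uIcc_of_le h0, uIcc_of_le (h0.trans ht)]; exact Icc_subset_Icc_right ht)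
  rw [← intervalIntegral.integral_add_adjacent_intervals (intervalIntegrable_cat_left hf) h2,
    integral_cat_left (by norm_num) le_rfl, h1,
    intervalIntegral.integral_comp_mul_sub g two_ne_zero 1]
  norm_num

end Cat

lemma continuousOn_cat {f g : ℝ → ℝ × ℝ} (hf : ContinuousOn f (Icc 0 1))
    (hg : ContinuousOn g (Icc 0 1)) (h : f 0 = g 0) : ContinuousOn (cat f g) (Icc 0 1) := by
  have hU : Icc (0 : ℝ) 1 = Icc 0 (1 / 2) ∪ Icc (1 / 2) 1 :=
    (Icc_union_Icc_eq_Icc (by norm_num) (by norm_num)).symm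
  rw [hU]
  refine ContinuousOn.union_of_isClosed ?_ ?_ isClosed_Icc isClosed_Icc
  · have h1 : ContinuousOn (fun t : ℝ => f (1 - 2 * t)) (Icc 0 (1 / 2)) :=
      hf.comp (by fun_prop) fun t ht => ⟨by linarith [ht.2], by linarith [ht.1]⟩
    exact h1.congr fun t ht => if_pos ht.2
  · have h1 : ContinuousOn (fun t : ℝ => g (2 * t - 1)) (Icc (1 / 2) 1) :=
      hg.comp (by fun_prop) fun t ht => ⟨by linarith [ht.1], by linarith [ht.2]⟩
    refine h1.congr fun t ht => ?_
    rcases ht.1.eq_or_lt with rfl | hlt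
    · simp [cat, h]
    · exact cat_of_lt hlt

/-- Lengths of curves from a common point add up: reverse the first curve and follow it by the second. -/
lemma joined_cat {a b c : ℝ × ℝ} {L M : ℝ} (h₁ : JoinedBy a b L) (h₂ : JoinedBy a c M) :
    JoinedBy b c (L + M) := by
  obtain ⟨γ, u, hp, h0, h1, rfl⟩ := h₁
  obtain ⟨η, v, hq, k0, k1, rfl⟩ := h₂
  have hI := hp.integrable_velocity (t := 1) (by simp)
  have hJ := hq.integrable_velocity (t := 1) (by simp)
  set w := cat (fun t => (-2 : ℝ) • u t) (fun t => (2 : ℝ) • v t) with hw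
  have hvel : velocity (cat γ η) w =
      cat (fun t => (-2 : ℝ) • velocity γ u t) (fun t => (2 : ℝ) • velocity η v t) := by
    funext t
    by_cases ht : t ≤ 1 / 2
    · simp only [velocity, hw, cat, if_pos ht]
      ext <;> simp; ring
    · simp only [velocity, hw, cat, if_neg ht]
      ext <;> simp; ring
  have hsp : speed w = cat (fun t => 2 * speed u t) (fun t => 2 * speed v t) := by
    have key : ∀ (r : ℝ) (p : ℝ × ℝ), r ^ 2 = 2 ^ 2 →
        Real.sqrt ((r • p).1 ^ 2 + (r • p).2 ^ 2) = 2 * Real.sqrt (p.1 ^ 2 + p.2 ^ 2) := by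
      intro r p hr
      rw [← Real.sqrt_sq (zero_le_two (α := ℝ)), ← Real.sqrt_mul (by positivity)]
      congr 1
      simp only [Prod.smul_fst, Prod.smul_snd, smul_eq_mul]
      linear_combination (p.1 ^ 2 + p.2 ^ 2) * hr
    funext t
    by_cases ht : t ≤ 1 / 2
    · simp only [speed, hw, cat, if_pos ht]
      exact key _ _ (by norm_num)
    · simp only [speed, hw, cat, if_neg ht]
      exact key _ _ (by norm_num)
  have hc0 : cat γ η 0 = b := by simp [cat, h1]
  refine ⟨cat γ η, w, ?_, hc0, by norm_num [cat, k1], ?_⟩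
  · obtain ⟨C, hC⟩ := hp.2.2.1
    obtain ⟨D, hD⟩ := hq.2.2.1
    have hC0 : 0 ≤ C := (norm_nonneg _).trans (hC 0 (by simp))
    have hD0 : 0 ≤ D := (norm_nonneg _).trans (hD 0 (by simp))
    refine IsAdmissiblePair.of_continuousOn (C := 2 * C + 2 * D)
      (intervalIntegrable_cat (hp.intervalIntegrable.smul (-2 : ℝ))
        (hq.intervalIntegrable.smul (2 : ℝ))) ?_
      (continuousOn_cat hp.continuousOn hq.continuousOn (h0.trans k0.symm)) ?_
    · intro t ht
      by_cases hh : t ≤ 1 / 2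
      · have := hC (1 - 2 * t) ⟨by linarith, by linarith [ht.1]⟩
        simp only [hw, cat, if_pos hh, norm_smul]
        norm_num
        linarith
      · have := hD (2 * t - 1) ⟨by linarith, by linarith [ht.2]⟩
        simp only [hw, cat, if_neg hh, norm_smul]
        norm_num
        linarith
    · intro t ht
      rw [hvel, hc0]
      have e1 := hp.2.2.2 1 (by simp)
      change γ 1 = γ 0 + ∫ s in (0 : ℝ)..1, velocity γ u s at e1
      rcases le_total t (1 / 2) with hh | hh
      · have hm : 1 - 2 * t ∈ Icc (0 : ℝ) 1 := ⟨by linarith, by linarith [ht.1]⟩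
        have e2 := hp.2.2.2 _ hm
        change γ (1 - 2 * t) = γ 0 + ∫ s in (0 : ℝ)..(1 - 2 * t), velocity γ u s at e2
        rw [integral_cat_left ht.1 hh, intervalIntegral.integral_smul, smul_smul, cat, if_pos hh,
          ← intervalIntegral.integral_interval_sub_left hI (hp.integrable_velocity hm), e2, ← h1,
          e1]
        norm_num
      · have hm : 2 * t - 1 ∈ Icc (0 : ℝ) 1 := ⟨by linarith, by linarith [ht.2]⟩
        have e2 := hq.2.2.2 _ hm
        change η (2 * t - 1) = η 0 + ∫ s in (0 : ℝ)..(2 * t - 1), velocity η v s at e2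
        have e3 : cat γ η t = η (2 * t - 1) := by
          rcases hh.eq_or_lt with rfl | hlt
          · simp [cat, h0, k0]
          · exact cat_of_lt hlt
        have e4 := integral_cat_right (hI.smul (-2 : ℝ)) (hJ.smul (2 : ℝ)) hh ht.2
        simp only [Pi.smul_def] at e4
        rw [e4, intervalIntegral.integral_smul, intervalIntegral.integral_smul, smul_smul, smul_smul,
          e3, e2, ← h1, e1, h0, k0]
        norm_num
  · rw [hsp, integral_cat_right (hp.intervalIntegrable_speed.const_mul 2)
      (hq.intervalIntegrable_speed.const_mul 2) (by norm_num) le_rfl,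
      intervalIntegral.integral_const_mul, intervalIntegral.integral_const_mul]
    norm_num
    ring

/-! ### Explicit curves -/

/-- A curve with constant control whose velocity is constant. -/
lemma joined_affine (a b p : ℝ × ℝ)
    (hv : ∀ t, velocity (fun t => a + t • (b - a)) (fun _ => p) t = b - a) :
    JoinedBy a b (Real.sqrt (p.1 ^ 2 + p.2 ^ 2)) := by
  refine ⟨fun t => a + t • (b - a), fun _ => p, ?_, by simp, by simp, by simp [speed]⟩
  refine IsAdmissiblePair.of_continuousOn (C := ‖p‖) (by simp) (fun _ _ => le_rfl) (by fun_prop) ?_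
  intro t _
  simp only [hv]
  simp [smul_sub]

lemma joined_horizontal (x₀ x₁ y : ℝ) : JoinedBy (x₀, y) (x₁, y) |x₁ - x₀| := by
  have := joined_affine (x₀, y) (x₁, y) (x₁ - x₀, 0) (by intro t; simp [velocity])
  simpa [Real.sqrt_sq_eq_abs] using this

lemma joined_vertical {x : ℝ} (hx : x ≠ 0) (y₀ y₁ : ℝ) :
    JoinedBy (x, y₀) (x, y₁) |(y₁ - y₀) / x| := by
  have := joined_affine (x, y₀) (x, y₁) (0, (y₁ - y₀) / x)
    (by intro t; simp [velocity]; field_simp)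
  simpa [Real.sqrt_sq_eq_abs] using this

/-- Upper bound for the distance by a vertical segment over `a.1` followed by a horizontal one. -/
lemma grushinDist_le_elbow {a b : ℝ × ℝ} (ha : a.1 ≠ 0) :
    JoinedBy a b (|(a.2 - b.2) / a.1| + |b.1 - a.1|) :=
  joined_cat (joined_vertical ha b.2 a.2) (joined_horizontal a.1 b.1 b.2)

/-! ### Contracting the second coordinate -/

/-- Pointwise length gain from multiplying the second control by `r`. It combines
`√X ≤ (X + S²) / (2 S)` with `q² / S ≥ 2 c |q| - c² S`; integrating the latter and optimizing in
`c` gives the Cauchy-Schwarz bound. -/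
lemma sqrt_contract_le {r : ℝ} (hr : r ∈ Ico (0 : ℝ) 1) (c p q : ℝ) :
    Real.sqrt (p ^ 2 + (r * q) ^ 2) ≤ Real.sqrt (p ^ 2 + q ^ 2) -
      (1 - r ^ 2) / 2 * (2 * c * |q| - c ^ 2 * Real.sqrt (p ^ 2 + q ^ 2)) := by
  have hk : 0 ≤ (1 - r ^ 2) / 2 := by nlinarith [hr.1, hr.2]
  set S := Real.sqrt (p ^ 2 + q ^ 2) with hS
  have hS2 : S ^ 2 = p ^ 2 + q ^ 2 := Real.sq_sqrt (by positivity)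
  have hS0 : 0 ≤ S := Real.sqrt_nonneg _
  rcases hS0.eq_or_lt with h0 | hpos
  · have hp : p = 0 := by nlinarith [sq_nonneg p, sq_nonneg q]
    have hq : q = 0 := by nlinarith [sq_nonneg p, sq_nonneg q]
    simp [hp, hq, ← h0]
  · have hX : Real.sqrt (p ^ 2 + (r * q) ^ 2) ≤ S - (1 - r ^ 2) / 2 * (q ^ 2 / S) := by
      set T := Real.sqrt (p ^ 2 + (r * q) ^ 2) with hT
      have hT2 : T ^ 2 = p ^ 2 + (r * q) ^ 2 := Real.sq_sqrt (by positivity)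
      have e : S - (1 - r ^ 2) / 2 * (q ^ 2 / S) = (T ^ 2 + S ^ 2) / (2 * S) := by
        field_simp
        rw [hT2, hS2]; ring
      rw [e, le_div_iff₀ (by positivity)]
      nlinarith [sq_nonneg (T - S)]
    have hq : 2 * c * |q| - c ^ 2 * S ≤ q ^ 2 / S := by
      rw [le_div_iff₀ hpos, ← sq_abs q]
      nlinarith [sq_nonneg (|q| - c * S)]
    nlinarith [mul_le_mul_of_nonneg_left hq hk]

/-- Contracting the second coordinate of near-minimizers from `a` to `b` towards the height of
`b` produces a curve strictly shorter than the distance. -/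
lemma exists_shorter {a b : ℝ × ℝ} (hd : 0 < grushinDist a b) (hab : a.2 ≠ b.2) {r : ℝ}
    (hr : r ∈ Ico (0 : ℝ) 1) :
    ∃ L, JoinedBy (a.1, b.2 + r * (a.2 - b.2)) b L ∧ L < grushinDist a b := by
  set d := grushinDist a b with hd'
  have hk : 0 < (1 - r ^ 2) / 2 := by nlinarith [hr.1, hr.2]
  have hh : 0 < |b.2 - a.2| := abs_pos.2 (sub_ne_zero.2 hab.symm)
  have hR : 0 < |a.1| + (d + 1) := by positivity
  -- `A` is a lower bound for `∫ |u₂|` and `δ` for the gain, over curves of length at most `d + 1`.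
  set A := |b.2 - a.2| / (|a.1| + (d + 1)) with hA
  have hA0 : 0 < A := div_pos hh hR
  set c := A / (d + 1) with hc
  have hc0 : 0 < c := by positivity
  set δ := (1 - r ^ 2) / 2 * (A ^ 2 / (d + 1)) with hδ
  have hδ0 : 0 < δ := by positivity
  obtain ⟨L, ⟨γ, u, hp, h0, h1, rfl⟩, hL⟩ :=
    exists_near (Or.inr hd) (lt_min one_pos hδ0)
  rw [← hd'] at hL
  set L := ∫ t in (0 : ℝ)..1, speed u t with hLdef
  have hL1 : L ≤ d + 1 := hL.le.trans (by linarith [min_le_left 1 δ])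
  have hLδ : L < d + δ := hL.trans_le (by linarith [min_le_right 1 δ])
  have hu1 := hp.intervalIntegrable
  have hu2 : IntervalIntegrable (fun s => (u s).2) volume 0 1 := ⟨hu1.1.snd, hu1.2.snd⟩
  have hu2a : IntervalIntegrable (fun s => |(u s).2|) volume 0 1 := hu2.abs
  have hAle : A ≤ ∫ s in (0 : ℝ)..1, |(u s).2| := by
    rw [hA, div_le_iff₀ hR, mul_comm, ← intervalIntegral.integral_const_mul]
    have e := hp.snd_eq (t := 1) (by simp)
    rw [h0, h1] at e
    rw [e, add_sub_cancel_left, ← Real.norm_eq_abs]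
    refine intervalIntegral.norm_integral_le_of_norm_le zero_le_one
      (Filter.Eventually.of_forall fun s hs => ?_) (hu2a.const_mul _)
    rw [norm_mul]
    refine mul_le_mul_of_nonneg_right ?_ (abs_nonneg _)
    have hx := hp.abs_fst_sub_le (Ioc_subset_Icc_self hs)
    rw [h0] at hx
    rw [Real.norm_eq_abs]
    have := abs_sub_abs_le_abs_sub (γ s).1 a.1
    linarith
  set η : ℝ → ℝ × ℝ := fun t => ((γ t).1, b.2 + r * ((γ t).2 - b.2)) with hη
  set v : ℝ → ℝ × ℝ := fun t => ((u t).1, r * (u t).2) with hv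
  have hη0 : η 0 = (a.1, b.2 + r * (a.2 - b.2)) := by simp [hη, h0]
  have hpair : IsAdmissiblePair η v := by
    obtain ⟨C, hC⟩ := hp.2.2.1
    have hv1 : IntervalIntegrable v volume 0 1 :=
      ⟨hu1.1.fst.prodMk (hu1.1.snd.const_mul r), hu1.2.fst.prodMk (hu1.2.snd.const_mul r)⟩
    have hηc : ContinuousOn η (Icc 0 1) := by
      have := hp.continuousOn
      exact this.fst.prodMk (continuousOn_const.add
        (continuousOn_const.mul (this.snd.sub continuousOn_const)))
    refine IsAdmissiblePair.of_continuousOn (C := C) hv1 ?_ hηc ?_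
    · intro t ht
      have e1 : ‖(u t).1‖ ≤ C := (norm_fst_le _).trans (hC t ht)
      have e2 : ‖(u t).2‖ ≤ C := (norm_snd_le _).trans (hC t ht)
      refine norm_prod_le_iff.2 ⟨e1, ?_⟩
      simp only [hv, norm_mul, Real.norm_of_nonneg hr.1]
      nlinarith [hr.1, hr.2, norm_nonneg (u t).2]
    · intro t ht
      have hi : IntervalIntegrable (velocity η v) volume 0 t :=
        (intervalIntegrable_velocity hv1 hηc).mono_set
          (by rw [uIcc_of_le ht.1, uIcc_of_le zero_le_one]; exact Icc_subset_Icc_right ht.2)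
      have g1 := (ContinuousLinearMap.fst ℝ ℝ ℝ).intervalIntegral_comp_comm hi
      have g2 := (ContinuousLinearMap.snd ℝ ℝ ℝ).intervalIntegral_comp_comm hi
      simp only [ContinuousLinearMap.coe_fst', ContinuousLinearMap.coe_snd'] at g1 g2
      refine Prod.ext ?_ ?_
      · rw [Prod.fst_add, ← g1]
        exact hp.fst_eq ht
      · rw [Prod.snd_add, ← g2]
        have e : ∀ s, (velocity η v s).2 = r * ((γ s).1 * (u s).2) := fun s => by
          simp only [velocity, hη, hv]; ring
        simp only [e, intervalIntegral.integral_const_mul]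
        simp only [hη]
        rw [hp.snd_eq ht]; ring
  refine ⟨_, ⟨η, v, hpair, hη0, ?_, rfl⟩, ?_⟩
  · simp [hη, h1]
  · have hs := hp.intervalIntegrable_speed
    have hle : ∫ t in (0 : ℝ)..1, speed v t ≤ ∫ t in (0 : ℝ)..1,
        (speed u t - (1 - r ^ 2) / 2 * (2 * c * |(u t).2| - c ^ 2 * speed u t)) := by
      refine intervalIntegral.integral_mono_on zero_le_one hpair.intervalIntegrable_speed ?_
        fun t _ => sqrt_contract_le hr c (u t).1 (u t).2
      exact hs.sub (((hu2a.const_mul _).sub (hs.const_mul _)).const_mul _)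
    rw [intervalIntegral.integral_sub hs
        (((hu2a.const_mul _).sub (hs.const_mul _)).const_mul _),
      intervalIntegral.integral_const_mul,
      intervalIntegral.integral_sub (hu2a.const_mul _) (hs.const_mul _),
      intervalIntegral.integral_const_mul, intervalIntegral.integral_const_mul, ← hLdef] at hle
    have hgain : A ^ 2 / (d + 1) ≤ 2 * c * (∫ s in (0 : ℝ)..1, |(u s).2|) - c ^ 2 * L := by
      have e : A ^ 2 / (d + 1) = 2 * c * A - c ^ 2 * (d + 1) := by
        rw [hc]; field_simp; ring
      rw [e]
      nlinarith [mul_le_mul_of_nonneg_left hAle hc0.le, mul_le_mul_of_nonneg_left hL1 (sq_nonneg c)]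
    have := mul_le_mul_of_nonneg_left hgain hk.le
    linarith

/-- A point whose distances to `q₀` and `q₁` add up to `d(q₀, q₁)` cannot be separated from both
of them by a horizontal line `y = m`. The line may touch `q₀` and `q₁` but not `q`. -/
lemma not_separated {q₀ q₁ q : ℝ × ℝ} {m : ℝ} (h₀ : 0 < grushinDist q q₀)
    (h₁ : 0 < grushinDist q q₁)
    (hm : grushinDist q q₀ + grushinDist q q₁ ≤ grushinDist q₀ q₁) :
    ¬ ((q₀.2 ≤ m ∧ q₁.2 ≤ m ∧ m < q.2) ∨ (m ≤ q₀.2 ∧ m ≤ q₁.2 ∧ q.2 < m)) := by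
  intro h
  have key : ∀ p : ℝ × ℝ, 0 < grushinDist q p → ((p.2 ≤ m ∧ m < q.2) ∨ (m ≤ p.2 ∧ q.2 < m)) →
      ∃ L, JoinedBy (q.1, m) p L ∧ L < grushinDist q p := by
    intro p hp hpm
    have hne : q.2 - p.2 ≠ 0 := by
      rcases hpm with h | h
      · exact (by linarith [h.1, h.2] : 0 < q.2 - p.2).ne'
      · exact (by linarith [h.1, h.2] : q.2 - p.2 < 0).ne
    have hr : (m - p.2) / (q.2 - p.2) ∈ Ico (0 : ℝ) 1 := by
      rcases hpm with h | h
      · have : 0 < q.2 - p.2 := by linarith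
        exact ⟨div_nonneg (by linarith) this.le, (div_lt_one this).2 (by linarith)⟩
      · have : q.2 - p.2 < 0 := by linarith
        exact ⟨div_nonneg_of_nonpos (by linarith) this.le, (div_lt_one_of_neg this).2 (by linarith)⟩
    have := exists_shorter hp (sub_ne_zero.1 hne) hr
    rwa [div_mul_cancel₀ _ hne, add_sub_cancel] at this
  obtain ⟨L, hL, hLlt⟩ := key q₀ h₀ (by tauto)
  obtain ⟨M, hM, hMlt⟩ := key q₁ h₁ (by tauto)
  have := grushinDist_le (joined_cat hL hM)
  linarith

theorem stmt_14 :
    ∃ C > (0 : ℝ), ∃ ℓ₀ ≥ (1 : ℝ), ∀ ℓ ≥ ℓ₀, ∀ q₀ q₁ q : ℝ × ℝ,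
      q₀ ∈ Icc (-ℓ - 1) (-ℓ) ×ˢ Icc (0 : ℝ) 1 →
      q₁ ∈ Icc ℓ (ℓ + 1) ×ˢ Icc (0 : ℝ) 1 →
      grushinDist q q₀ = grushinDist q₀ q₁ / 2 →
      grushinDist q q₁ = grushinDist q₀ q₁ / 2 →
      |q.1| ≤ 1 + C / ℓ ∧ q.2 ∈ Icc (0 : ℝ) 1 := by
  refine ⟨1, one_pos, 1, le_rfl, ?_⟩
  rintro ℓ hℓ q₀ q₁ q ⟨⟨ha, hb⟩, hc, hd⟩ ⟨⟨ha', hb'⟩, hc', hd'⟩ h₀ h₁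
  have hℓ0 : 0 < ℓ := by linarith
  have hx0 : q₀.1 < 0 := by linarith
  have hJ := grushinDist_le_elbow (b := q₁) hx0.ne
  have hlow := abs_fst_sub_le_dist (Or.inl ⟨_, hJ⟩)
  have hup := grushinDist_le hJ
  have hpos : q₁.1 - q₀.1 > 0 := by linarith
  rw [abs_of_pos hpos] at hlow hup
  have hv : |(q₀.2 - q₁.2) / q₀.1| ≤ 1 / ℓ := by
    rw [abs_div]
    refine div_le_div₀ zero_le_one (abs_le.2 ⟨by linarith, by linarith⟩) hℓ0 ?_
    rw [abs_of_neg hx0]; linarith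
  have p₀ : 0 < grushinDist q q₀ := by linarith
  have p₁ : 0 < grushinDist q q₁ := by linarith
  have b₀ := abs_le.1 (abs_fst_sub_le_dist (Or.inr p₀))
  have b₁ := abs_le.1 (abs_fst_sub_le_dist (Or.inr p₁))
  have hinv : 0 < 1 / ℓ := by positivity
  refine ⟨abs_le.2 ⟨by linarith, by linarith⟩, ?_, ?_⟩ <;> by_contra! hlt
  · exact not_separated p₀ p₁ (by linarith) (Or.inr ⟨hc, hc', hlt⟩)
  · exact not_separated p₀ p₁ (by linarith) (Or.inl ⟨hd, hd', hlt⟩)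
end
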